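/- arXiv:2509.03048 — 2 statements merged into one kernel-verified Lean document; each statement's English description precedes it below -/
import Mathlib

section
/- For the elephant random walk with memory parameter p ∈ [0, 1) on a Cayley graph that is the d-regular tree T_d (d ≥ 3), the sequence of random variables r_n · (Δ_n/n − (d − 2)/d), n ≥ 1, is tight (i.e. for every ε > 0 there exists K > 0 such that P(|r_n (Δ_n/n − (d − 2)/d)| > K) < ε for all n), where r_n = n^{1/2} if p < p_d, r_n = (n / log n)^{1/2} if p = p_d, and r_n = n^{d(1−p)/(d−1)} if p > p_d, with p_d = (d + 1)/(2d). -/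
open MeasureTheory ProbabilityTheory Filter

noncomputable section

/-- The Cayley graph of a group with respect to a finite set of generators. -/
def cayleyGraph {G : Type*} [Group G] (S : Finset G) : SimpleGraph G where
  Adj x y := x ≠ y ∧ (y * x⁻¹ ∈ S ∨ x * y⁻¹ ∈ S)
  symm := by
    constructor
    rintro x y ⟨h1, h2⟩
    refine ⟨h1.symm, ?_⟩
    rcases h2 with h | h
    · exact Or.inr h
    · exact Or.inl h
  loopless := ⟨fun x h => h.1 rfl⟩

/-- The elephant random walk (ERW) with memory parameter `p` on the Cayley graph of a
group `G` with respect to a symmetric generating set `S` of cardinality `d`, not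
containing the identity, whose Cayley graph is a tree (hence the `d`-regular tree
`T_d`).  The steps are `g 1, g 2, …` (the value of `g 0` is irrelevant).  The law of
the process is characterised by: `g 1` is uniform on `S`, and, conditionally on the
first `n` steps being `s 1, …, s n`, the next step `g (n+1)` equals `a ∈ S` with
probability `p * N/n + ((1-p)/(d-1)) * (n-N)/n`, where `N = #{1 ≤ k ≤ n : s k = a}`;
this is precisely the probability that the walker, recalling a uniform past epoch
`D ∈ {1, …, n}`, repeats `g D` with probability `p` and takes any given other step
with probability `(1-p)/(d-1)`. -/
structure ERW (G : Type*) [Group G] [DecidableEq G] (d : ℕ) (p : ℝ)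
    (Ω : Type*) [MeasurableSpace Ω] (P : Measure Ω) where
  S : Finset G
  card_S : S.card = d
  symm_S : ∀ s ∈ S, s⁻¹ ∈ S
  one_not_mem : (1 : G) ∉ S
  tree : (cayleyGraph S).IsTree
  g : ℕ → Ω → G
  meas_g : ∀ n a, MeasurableSet {ω | g n ω = a}
  mem_S : ∀ n, 1 ≤ n → ∀ ω, g n ω ∈ S
  init : ∀ a ∈ S, (P {ω | g 1 ω = a}).toReal = 1 / d
  update : ∀ n, 1 ≤ n → ∀ s : ℕ → G, ∀ a ∈ S,
    (P ({ω | ∀ k ∈ Finset.Icc 1 n, g k ω = s k} ∩ {ω | g (n + 1) ω = a})).toReal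
      = (p * ((((Finset.Icc 1 n).filter fun k => s k = a).card : ℝ) / n)
          + (1 - p) / ((d : ℝ) - 1)
            * (((n : ℝ) - (((Finset.Icc 1 n).filter fun k => s k = a).card : ℝ)) / n))
        * (P {ω | ∀ k ∈ Finset.Icc 1 n, g k ω = s k}).toReal

namespace ERW

variable {G : Type*} [Group G] [DecidableEq G] {d : ℕ} {p : ℝ}
  {Ω : Type*} [MeasurableSpace Ω] {P : Measure Ω}

/-- The position `w n = g n ⋯ g 1` of the walk at time `n`. -/
def pos (E : ERW G d p Ω P) : ℕ → Ω → G
  | 0 => fun _ => 1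
  | n + 1 => fun ω => E.g (n + 1) ω * E.pos n ω

/-- `Δ n`: the (word-metric) distance of the walker from the root at time `n`. -/
def dist (E : ERW G d p Ω P) (n : ℕ) (ω : Ω) : ℕ :=
  (cayleyGraph E.S).dist 1 (E.pos n ω)

/-- `N n a`: the number of `a`-steps taken by time `n`. -/
def count (E : ERW G d p Ω P) (a : G) (n : ℕ) (ω : Ω) : ℕ :=
  ((Finset.Icc 1 n).filter fun k => E.g k ω = a).card

/-- `γ n`: the unique step decreasing the distance to the root by 1
(a junk value if the walker is at the root). -/
def gammaStep (E : ERW G d p Ω P) (n : ℕ) (ω : Ω) : G :=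
  @Classical.epsilon G ⟨1⟩ fun s =>
    s ∈ E.S ∧ (cayleyGraph E.S).dist 1 (s * E.pos n ω) + 1 = E.dist n ω

/-- `ℓ n = N n (γ n)` if the walker is away from the root, and `0` otherwise. -/
def ell (E : ERW G d p Ω P) (n : ℕ) (ω : Ω) : ℕ :=
  if E.pos n ω = 1 then 0 else E.count (E.gammaStep n ω) n ω

/-- `Ξ n = (1/n) ∑_{k=0}^{n-1} (ℓ k / k - 1(Δ k > 0)/d)` (with the convention
`ℓ 0 / 0 = 0`, automatic since division by zero yields zero). -/
def Xi (E : ERW G d p Ω P) (n : ℕ) (ω : Ω) : ℝ :=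
  (1 / n) * ∑ k ∈ Finset.range n,
    ((E.ell k ω : ℝ) / k - (if 0 < E.dist k ω then 1 else 0) / d)

/-- The natural filtration `F n` generated by the steps up to time `n`. -/
def filt (E : ERW G d p Ω P) (n : ℕ) : MeasurableSpace Ω :=
  ⨆ k ∈ Finset.Icc 1 n, MeasurableSpace.comap (E.g k) ⊤

/-- `G n = E[Δ (n+1) - Δ n | F n]`. -/
def drift (E : ERW G d p Ω P) (n : ℕ) : Ω → ℝ :=
  P[fun ω => ((E.dist (n + 1) ω : ℝ) - (E.dist n ω : ℝ)) | E.filt n]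

/-- The martingale differences `Y k = Δ k - Δ (k-1) - G (k-1)`. -/
def mdiff (E : ERW G d p Ω P) (k : ℕ) (ω : Ω) : ℝ :=
  (E.dist k ω : ℝ) - (E.dist (k - 1) ω : ℝ) - E.drift (k - 1) ω

/-- The martingale `M n = ∑_{k=1}^n Y k`. -/
def mart (E : ERW G d p Ω P) (n : ℕ) (ω : Ω) : ℝ :=
  ∑ k ∈ Finset.Icc 1 n, E.mdiff k ω

end ERW

/-- The rate `r n`: `√n` in the subcritical regime `p < p_d = (d+1)/(2d)`,
`√(n / log n)` in the critical regime `p = p_d`, and `n ^ (d(1-p)/(d-1))` in the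
supercritical regime `p > p_d`. -/
def rate (p : ℝ) (d : ℕ) (n : ℕ) : ℝ :=
  if p < ((d : ℝ) + 1) / (2 * d) then Real.sqrt n
  else if p = ((d : ℝ) + 1) / (2 * d) then Real.sqrt ((n : ℝ) / Real.log n)
  else (n : ℝ) ^ ((d : ℝ) * (1 - p) / ((d : ℝ) - 1))


namespace ERW

section aux

variable {G : Type*} [Group G] [DecidableEq G] {d : ℕ} {p : ℝ}
  {Ω : Type*} [MeasurableSpace Ω] {P : Measure Ω}

/-! ### Tree geometry -/

theorem tree_unique_down {V : Type*} {T : SimpleGraph V} (hT : T.IsTree) (u v : V)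
    (huv : u ≠ v) : ∃! w, T.Adj v w ∧ T.dist u w < T.dist u v := by
  obtain ⟨q, hq, hql⟩ := hT.connected.exists_path_of_dist u v
  have hnn : ¬ q.Nil := by
    intro h
    exact huv h.eq
  refine ⟨q.penultimate, ⟨(q.adj_penultimate hnn).symm, ?_⟩, ?_⟩
  · have h1 := T.dist_le q.dropLast
    have h2 : q.dropLast.length + 1 = q.length := SimpleGraph.Walk.length_dropLast_add_one hnn
    omega
  · rintro w ⟨hw, hlt⟩
    obtain ⟨r, hr, hrl⟩ := hT.connected.exists_path_of_dist u w
    have hd := hT.dist_eq_dist_add_one_of_adj u hw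
    have hp : (r.concat hw.symm).IsPath := by
      apply SimpleGraph.Walk.isPath_of_length_eq_dist
      rw [SimpleGraph.Walk.length_concat]; omega
    have he := (hT.existsUnique_path u v).unique hp hq
    rw [← he]
    simp

theorem adj_iff (E : ERW G d p Ω P) (v w : G) :
    (cayleyGraph E.S).Adj v w ↔ ∃ a ∈ E.S, w = a * v := by
  constructor
  · rintro ⟨h1, h2 | h2⟩
    · exact ⟨_, h2, by group⟩
    · refine ⟨_, E.symm_S _ h2, by group⟩
  · rintro ⟨a, ha, rfl⟩
    refine ⟨?_, Or.inl (by simpa using ha)⟩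
    intro h
    have : a = 1 := by simpa using h
    exact E.one_not_mem (this ▸ ha)

theorem dist_step (E : ERW G d p Ω P) (w a : G) (ha : a ∈ E.S) :
    (cayleyGraph E.S).dist 1 (a * w) = (cayleyGraph E.S).dist 1 w + 1 ∨
    (cayleyGraph E.S).dist 1 w = (cayleyGraph E.S).dist 1 (a * w) + 1 := by
  have := E.tree.dist_eq_dist_add_one_of_adj 1 ((E.adj_iff w (a * w)).2 ⟨a, ha, rfl⟩)
  tauto

/-- indicator that the step `a` brings the walker at `w` closer to the root -/
def dn (E : ERW G d p Ω P) (w a : G) : ℝ :=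
  if (cayleyGraph E.S).dist 1 (a * w) < (cayleyGraph E.S).dist 1 w then 1 else 0

theorem sum_dn (E : ERW G d p Ω P) (w : G) :
    ∑ a ∈ E.S, E.dn w a = if (cayleyGraph E.S).dist 1 w = 0 then 0 else 1 := by
  split_ifs with h
  · apply Finset.sum_eq_zero
    intro a _
    simp [dn, h]
  · have hw : (1 : G) ≠ w := by
      rintro rfl
      simp at h
    obtain ⟨v, ⟨hv1, hv2⟩, hv⟩ := tree_unique_down E.tree 1 w hw
    obtain ⟨a, ha, rfl⟩ := (E.adj_iff _ _).1 hv1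
    rw [Finset.sum_eq_single a]
    · simp [dn, hv2]
    · intro b hb hba
      simp only [dn]
      rw [if_neg]
      intro hlt
      have := hv (b * w) ⟨(E.adj_iff _ _).2 ⟨b, hb, rfl⟩, hlt⟩
      exact hba (mul_right_cancel this)
    · intro h; exact absurd ha h

theorem dn_nonneg (E : ERW G d p Ω P) (w a : G) : 0 ≤ E.dn w a := by
  unfold dn; split_ifs <;> norm_num

theorem dn_le_one (E : ERW G d p Ω P) (w a : G) : E.dn w a ≤ 1 := by
  unfold dn; split_ifs <;> norm_num

/-! ### Functions of the first `n` steps -/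

/-- `h` is a function of the first `n` steps. -/
def Det (E : ERW G d p Ω P) (n : ℕ) (h : Ω → ℝ) : Prop :=
  ∀ ω η, (∀ k ∈ Finset.Icc 1 n, E.g k ω = E.g k η) → h ω = h η

/-- extension of a finite path -/
def ext (E : ERW G d p Ω P) (n : ℕ) (t : (Finset.Icc 1 n) → E.S) (k : ℕ) : G :=
  if h : k ∈ Finset.Icc 1 n then (t ⟨k, h⟩ : G) else 1

/-- cylinder event -/
def cyl (E : ERW G d p Ω P) (n : ℕ) (s : ℕ → G) : Set Ω :=
  {ω | ∀ k ∈ Finset.Icc 1 n, E.g k ω = s k}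

theorem meas_cyl (E : ERW G d p Ω P) (n : ℕ) (s : ℕ → G) : MeasurableSet (E.cyl n s) := by
  have : E.cyl n s = ⋂ k ∈ Finset.Icc 1 n, {ω | E.g k ω = s k} := by
    ext ω; simp [cyl]
  rw [this]
  exact Finset.measurableSet_biInter _ fun k _ => E.meas_g k _

theorem iUnion_cyl (E : ERW G d p Ω P) (n : ℕ) :
    ⋃ t : (Finset.Icc 1 n) → E.S, E.cyl n (E.ext n t) = Set.univ := by
  ext ω
  simp only [Set.mem_iUnion, Set.mem_univ, iff_true]
  refine ⟨fun k => ⟨E.g k ω, E.mem_S k (Finset.mem_Icc.1 k.2).1 ω⟩, ?_⟩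
  intro k hk
  simp only [ext, dif_pos hk]

theorem disj_cyl (E : ERW G d p Ω P) (n : ℕ) :
    Pairwise (Function.onFun Disjoint
      fun t : (Finset.Icc 1 n) → E.S => E.cyl n (E.ext n t)) := by
  intro t t' hne
  rw [Function.onFun, Set.disjoint_left]
  intro ω h h'
  apply hne
  funext k
  have h1 := h k k.2
  have h2 := h' k k.2
  rw [h1] at h2
  simp only [ext, k.2, dif_pos] at h2
  exact Subtype.ext h2

theorem Det.measurable {E : ERW G d p Ω P} {n : ℕ} {h : Ω → ℝ} (hh : E.Det n h) :
    Measurable h := by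
  classical
  intro B _
  have : h ⁻¹' B = ⋃ t : (Finset.Icc 1 n) → E.S,
      (if ∃ ω ∈ E.cyl n (E.ext n t), h ω ∈ B then E.cyl n (E.ext n t) else ∅) := by
    ext ω
    simp only [Set.mem_preimage, Set.mem_iUnion]
    constructor
    · intro hω
      have := (E.iUnion_cyl n).symm ▸ Set.mem_univ ω
      obtain ⟨t, ht⟩ := Set.mem_iUnion.1 this
      refine ⟨t, ?_⟩
      rw [if_pos ⟨ω, ht, hω⟩]
      exact ht
    · rintro ⟨t, ht⟩
      split_ifs at ht with hc
      · obtain ⟨ω', hω', hB⟩ := hc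
        rw [hh ω ω' (fun k hk => (ht k hk).trans (hω' k hk).symm)]
        exact hB
      · exact absurd ht (Set.notMem_empty _)
  rw [this]
  refine MeasurableSet.iUnion fun t => ?_
  split_ifs
  · exact E.meas_cyl _ _
  · exact MeasurableSet.empty

theorem Det.bdd {E : ERW G d p Ω P} {n : ℕ} {h : Ω → ℝ} (hh : E.Det n h) :
    ∃ C, ∀ ω, |h ω| ≤ C := by
  classical
  by_cases hne : Nonempty Ω
  swap
  · exact ⟨0, fun ω => (hne ⟨ω⟩).elim⟩
  obtain ⟨ω0⟩ := hne
  let r : ((Finset.Icc 1 n) → E.S) → ℝ := fun t =>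
    if hc : (E.cyl n (E.ext n t)).Nonempty then |h hc.some| else 0
  refine ⟨∑ t, r t, fun ω => ?_⟩
  obtain ⟨t, ht⟩ := Set.mem_iUnion.1 ((E.iUnion_cyl n).symm ▸ Set.mem_univ ω)
  have hc : (E.cyl n (E.ext n t)).Nonempty := ⟨ω, ht⟩
  have h1 : |h ω| = r t := by
    simp only [r, dif_pos hc]
    rw [hh ω hc.some (fun k hk => (ht k hk).trans (hc.some_mem k hk).symm)]
  rw [h1]
  apply Finset.single_le_sum (f := r) _ (Finset.mem_univ t)
  intro i _
  simp only [r]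
  split_ifs
  · exact abs_nonneg _
  · exact le_rfl

theorem Det.integrable [IsProbabilityMeasure P] {E : ERW G d p Ω P} {n : ℕ} {h : Ω → ℝ}
    (hh : E.Det n h) : Integrable h P := by
  obtain ⟨C, hC⟩ := hh.bdd
  exact Integrable.of_bound hh.measurable.aestronglyMeasurable C
    (Filter.Eventually.of_forall hC)

theorem Det.mono {E : ERW G d p Ω P} {n m : ℕ} {h : Ω → ℝ}
    (hh : E.Det n h) (hnm : n ≤ m) : E.Det m h := by
  intro ω ω' H
  exact hh ω ω' fun k hk => H k (Finset.Icc_subset_Icc_right hnm hk)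

/-- indicator of the event that step `n+1` is `a` -/
def ind (E : ERW G d p Ω P) (n : ℕ) (a : G) (ω : Ω) : ℝ :=
  if E.g (n + 1) ω = a then 1 else 0

/-- the centered counts -/
def X (E : ERW G d p Ω P) (a : G) (n : ℕ) (ω : Ω) : ℝ := (E.count a n ω : ℝ) - n / d

/-- the elephant parameter -/
def al (d : ℕ) (p : ℝ) : ℝ := (d * p - 1) / (d - 1)

/-- the transition probabilities -/
def pr (E : ERW G d p Ω P) (n : ℕ) (a : G) (ω : Ω) : ℝ := 1 / d + al d p * (E.X a n ω / n)

theorem det_count (E : ERW G d p Ω P) (a : G) (n : ℕ) :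
    E.Det n fun ω => (E.count a n ω : ℝ) := by
  intro ω ω' H
  simp only [count]
  congr 2
  apply Finset.filter_congr
  intro k hk
  rw [H k hk]

theorem det_X (E : ERW G d p Ω P) (a : G) (n : ℕ) : E.Det n (E.X a n) := by
  intro ω ω' H
  simp only [X, E.det_count a n ω ω' H]

theorem det_pr (E : ERW G d p Ω P) (a : G) (n : ℕ) : E.Det n (E.pr n a) := by
  intro ω ω' H
  simp only [pr, E.det_X a n ω ω' H]

theorem det_ind (E : ERW G d p Ω P) (a : G) (n : ℕ) : E.Det (n + 1) (E.ind n a) := by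
  intro ω ω' H
  simp only [ind, H (n + 1) (by simp)]

theorem pos_congr (E : ERW G d p Ω P) (n : ℕ) (ω ω' : Ω)
    (H : ∀ k ∈ Finset.Icc 1 n, E.g k ω = E.g k ω') : E.pos n ω = E.pos n ω' := by
  induction n with
  | zero => rfl
  | succ n ih =>
    simp only [pos]
    rw [H (n + 1) (by simp),
      ih fun k hk => H k (Finset.Icc_subset_Icc_right (Nat.le_succ n) hk)]

theorem pr_eq (hd : 3 ≤ d) (N n : ℝ) (hn : n ≠ 0) :
    p * (N / n) + (1 - p) / ((d : ℝ) - 1) * ((n - N) / n) =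
      1 / d + al d p * ((N - n / d) / n) := by
  have hd' : (3 : ℝ) ≤ d := by exact_mod_cast hd
  have h1 : (d : ℝ) - 1 ≠ 0 := by linarith
  have h2 : (d : ℝ) ≠ 0 := by linarith
  unfold al
  field_simp
  ring

theorem key [IsProbabilityMeasure P] (E : ERW G d p Ω P) (hd : 3 ≤ d) (n : ℕ) (hn : 1 ≤ n)
    (a : G) (ha : a ∈ E.S) (h : Ω → ℝ) (hh : E.Det n h) :
    ∫ ω, h ω * E.ind n a ω ∂P = ∫ ω, h ω * E.pr n a ω ∂P := by
  have i1 : Integrable (fun ω => h ω * E.ind n a ω) P := by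
    apply Det.integrable (E := E) (n := n + 1)
    intro ω ω' H
    simp only
    rw [E.det_ind a n ω ω' H, hh.mono (Nat.le_succ n) ω ω' H]
  have i2 : Integrable (fun ω => h ω * E.pr n a ω) P := by
    apply Det.integrable (E := E) (n := n)
    intro ω ω' H
    simp only
    rw [E.det_pr a n ω ω' H, hh ω ω' H]
  rw [← setIntegral_univ, ← setIntegral_univ (f := fun ω => h ω * E.pr n a ω),
    ← E.iUnion_cyl n,
    integral_iUnion_fintype (fun t => E.meas_cyl n _) (E.disj_cyl n) (fun t => i1.integrableOn),
    integral_iUnion_fintype (fun t => E.meas_cyl n _) (E.disj_cyl n) (fun t => i2.integrableOn)]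
  refine Finset.sum_congr rfl fun t _ => ?_
  set s := E.ext n t
  rcases Set.eq_empty_or_nonempty (E.cyl n s) with he | ⟨ω0, hω0⟩
  · rw [he]; simp
  have hm := E.meas_cyl n s
  have e1 : ∫ ω in E.cyl n s, h ω * E.ind n a ω ∂P =
      ∫ ω in E.cyl n s, h ω0 * ({ω | E.g (n + 1) ω = a}.indicator (fun _ => (1 : ℝ)) ω) ∂P := by
    refine setIntegral_congr_fun hm fun ω hω => ?_
    beta_reduce
    rw [hh ω ω0 fun k hk => (hω k hk).trans (hω0 k hk).symm]
    simp only [ind, Set.indicator_apply, Set.mem_setOf_eq]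
  have e2 : ∫ ω in E.cyl n s, h ω * E.pr n a ω ∂P =
      ∫ ω in E.cyl n s, h ω0 * E.pr n a ω0 ∂P := by
    refine setIntegral_congr_fun hm fun ω hω => ?_
    beta_reduce
    rw [hh ω ω0 fun k hk => (hω k hk).trans (hω0 k hk).symm,
      E.det_pr a n ω ω0 fun k hk => (hω k hk).trans (hω0 k hk).symm]
  rw [e1, e2, integral_const_mul, setIntegral_indicator (E.meas_g _ _)]
  simp only [integral_const, smul_eq_mul, mul_one, measureReal_restrict_apply_univ]
  have hu := E.update n hn s a ha
  have hn' : (n : ℝ) ≠ 0 := by positivity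
  rw [pr_eq hd _ _ hn'] at hu
  have hN : (((Finset.Icc 1 n).filter fun k => s k = a).card : ℝ) = E.count a n ω0 := by
    simp only [count]
    congr 2
    apply Finset.filter_congr
    intro k hk
    rw [hω0 k hk]
  rw [hN] at hu
  change P.real (E.cyl n s ∩ {ω | E.g (n + 1) ω = a}) =
    E.pr n a ω0 * P.real (E.cyl n s) at hu
  rw [hu]; ring

/-! ### Moment estimates -/

theorem al_lt_one (hd : 3 ≤ d) (hp1 : p < 1) : al d p < 1 := by
  have hd' : (3 : ℝ) ≤ d := by exact_mod_cast hd
  unfold al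
  rw [div_lt_one (by linarith)]
  nlinarith

theorem neg_half_le_al (hd : 3 ≤ d) (hp0 : 0 ≤ p) : -(1 / 2) ≤ al d p := by
  have hd' : (3 : ℝ) ≤ d := by exact_mod_cast hd
  unfold al
  rw [le_div_iff₀ (by linarith)]
  nlinarith

theorem abs_al_le (hd : 3 ≤ d) (hp0 : 0 ≤ p) (hp1 : p < 1) : |al d p| ≤ 1 := by
  rw [abs_le]
  have h1 := al_lt_one hd hp1
  have h2 := neg_half_le_al hd hp0
  constructor <;> linarith

theorem count_succ (E : ERW G d p Ω P) (a : G) (n : ℕ) (ω : Ω) :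
    (E.count a (n + 1) ω : ℝ) = E.count a n ω + E.ind n a ω := by
  have h : Finset.Icc 1 (n + 1) = insert (n + 1) (Finset.Icc 1 n) := by
    ext k; simp only [Finset.mem_Icc, Finset.mem_insert]; omega
  simp only [count, ind]
  rw [h, Finset.filter_insert]
  split_ifs with hc
  · rw [Finset.card_insert_of_notMem (by simp)]
    push_cast; ring
  · simp

theorem count_le (E : ERW G d p Ω P) (a : G) (n : ℕ) (ω : Ω) : E.count a n ω ≤ n := by
  simpa [count] using Finset.card_filter_le (Finset.Icc 1 n) fun k => E.g k ω = a

theorem abs_X_le (E : ERW G d p Ω P) (hd : 3 ≤ d) (a : G) (n : ℕ) (ω : Ω) :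
    |E.X a n ω| ≤ n := by
  have hd' : (3 : ℝ) ≤ d := by exact_mod_cast hd
  have h1 : (E.count a n ω : ℝ) ≤ n := by exact_mod_cast E.count_le a n ω
  have h2 : (0 : ℝ) ≤ E.count a n ω := by positivity
  have h3 : (n : ℝ) / d ≤ n := div_le_self (by positivity) (by linarith)
  have h4 : (0 : ℝ) ≤ (n : ℝ) / d := by positivity
  unfold X
  rw [abs_le]; constructor <;> linarith

theorem abs_X_div_le (E : ERW G d p Ω P) (hd : 3 ≤ d) (a : G) (n : ℕ) (ω : Ω) :
    |E.X a n ω / n| ≤ 1 := by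
  rw [abs_div, Nat.abs_cast]
  exact div_le_one_of_le₀ (E.abs_X_le hd a n ω) (by positivity)

theorem X_sq_step [IsProbabilityMeasure P] (E : ERW G d p Ω P) (hd : 3 ≤ d) (hp0 : 0 ≤ p)
    (hp1 : p < 1) (n : ℕ) (hn : 1 ≤ n) (a : G) (ha : a ∈ E.S) :
    ∫ ω, (E.X a (n + 1) ω) ^ 2 ∂P ≤
      (1 + 2 * al d p / n) * ∫ ω, (E.X a n ω) ^ 2 ∂P + 2 := by
  have hd' : (3 : ℝ) ≤ d := by exact_mod_cast hd
  have hn' : (1 : ℝ) ≤ n := by exact_mod_cast hn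
  have dX := E.det_X a n
  have d1 : E.Det n fun ω => (E.X a n ω - 1 / d) ^ 2 := fun ω ω' H => by
    simp only [dX ω ω' H]
  have d2 : E.Det n fun ω => 2 * (E.X a n ω - 1 / d) + 1 := fun ω ω' H => by
    simp only [dX ω ω' H]
  have d3 : E.Det (n + 1) fun ω => (2 * (E.X a n ω - 1 / d) + 1) * E.ind n a ω :=
    fun ω ω' H => by
      simp only [dX.mono (Nat.le_succ n) ω ω' H, E.det_ind a n ω ω' H]
  have d4 : E.Det n fun ω => (2 * (E.X a n ω - 1 / d) + 1) * E.pr n a ω :=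
    fun ω ω' H => by
      simp only [dX ω ω' H, E.det_pr a n ω ω' H]
  have d5 : E.Det n fun ω => (E.X a n ω) ^ 2 := fun ω ω' H => by
    simp only [dX ω ω' H]
  have e1 : ∫ ω, (E.X a (n + 1) ω) ^ 2 ∂P =
      ∫ ω, ((E.X a n ω - 1 / d) ^ 2 + (2 * (E.X a n ω - 1 / d) + 1) * E.ind n a ω) ∂P := by
    congr 1
    funext ω
    simp only [X, E.count_succ]
    have : E.ind n a ω ^ 2 = E.ind n a ω := by
      unfold ind; split_ifs <;> norm_num
    push_cast
    rw [add_div]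
    linear_combination this
  rw [e1, integral_add d1.integrable d3.integrable, E.key hd n hn a ha _ d2,
    ← integral_add d1.integrable d4.integrable]
  have e2 : (1 + 2 * al d p / n) * ∫ ω, (E.X a n ω) ^ 2 ∂P + 2 =
      ∫ ω, ((1 + 2 * al d p / n) * (E.X a n ω) ^ 2 + 2) ∂P := by
    rw [integral_add (d5.integrable.const_mul _) (integrable_const _), integral_const_mul]
    simp
  rw [e2]
  refine integral_mono (d1.integrable.add d4.integrable)
    ((d5.integrable.const_mul _).add (integrable_const _)) fun ω => ?_
  simp only [pr]
  set x := E.X a n ω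
  have hx : |x / n| ≤ 1 := E.abs_X_div_le hd a n ω
  have hax : |al d p * (x / n)| ≤ 1 := by
    rw [abs_mul]
    have := abs_al_le hd hp0 hp1
    nlinarith [abs_nonneg (al d p), abs_nonneg (x / n)]
  have hi0 : (0 : ℝ) < 1 / d := by positivity
  have hi1 : (1 : ℝ) / d ≤ 1 / 3 := one_div_le_one_div_of_le (by norm_num) hd'
  set u := (1 : ℝ) / d
  set y := al d p * (x / n) with hy
  have hxy : 2 * al d p / n * x ^ 2 = 2 * x * y := by rw [hy]; ring
  have h1 : y ≤ 1 := (abs_le.1 hax).2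
  have h2 : -1 ≤ y := (abs_le.1 hax).1
  nlinarith

theorem X_sq_one [IsProbabilityMeasure P] (E : ERW G d p Ω P) (hd : 3 ≤ d) (a : G) :
    ∫ ω, (E.X a 1 ω) ^ 2 ∂P ≤ 1 := by
  have d5 : E.Det 1 fun ω => (E.X a 1 ω) ^ 2 := fun ω ω' H => by
    simp only [E.det_X a 1 ω ω' H]
  have : ∫ ω, (E.X a 1 ω) ^ 2 ∂P ≤ ∫ _, (1 : ℝ) ∂P := by
    refine integral_mono d5.integrable (integrable_const _) fun ω => ?_
    have h := E.abs_X_le hd a 1 ω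
    simp only [Nat.cast_one] at h
    have := sq_le_sq' (abs_le.1 h).1 (abs_le.1 h).2
    simpa using this
  simpa using this

theorem integral_abs_le [IsProbabilityMeasure P] {E : ERW G d p Ω P} {n : ℕ} {h : Ω → ℝ}
    (hh : E.Det n h) (c : ℝ) (hc : 0 < c) (hv : ∫ ω, h ω ^ 2 ∂P ≤ c ^ 2) :
    ∫ ω, |h ω| ∂P ≤ c := by
  have d2 : E.Det n fun ω => h ω ^ 2 := fun ω ω' H => by simp only [hh ω ω' H]
  have : ∫ ω, |h ω| ∂P ≤ ∫ ω, ((1 / (2 * c)) * h ω ^ 2 + c / 2) ∂P := by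
    refine integral_mono hh.integrable.abs
      ((d2.integrable.const_mul _).add (integrable_const _)) fun ω => ?_
    have h1 : 1 / (2 * c) * h ω ^ 2 + c / 2 - |h ω| = (|h ω| - c) ^ 2 / (2 * c) := by
      rw [← sq_abs (h ω)]; field_simp; ring
    have h2 : 0 ≤ (|h ω| - c) ^ 2 / (2 * c) := by positivity
    linarith
  rw [integral_add (d2.integrable.const_mul _) (integrable_const _), integral_const_mul] at this
  simp only [integral_const, probReal_univ, smul_eq_mul, one_mul] at this
  have h3 : 1 / (2 * c) * ∫ ω, h ω ^ 2 ∂P ≤ 1 / (2 * c) * c ^ 2 :=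
    mul_le_mul_of_nonneg_left hv (by positivity)
  have h4 : 1 / (2 * c) * c ^ 2 = c / 2 := by field_simp
  linarith

/-- indicator of a step towards the root -/
def D (E : ERW G d p Ω P) (n : ℕ) (ω : Ω) : ℝ := ∑ a ∈ E.S, E.dn (E.pos n ω) a * E.ind n a ω

/-- conditional probability of a step towards the root -/
def Pr (E : ERW G d p Ω P) (n : ℕ) (ω : Ω) : ℝ := ∑ a ∈ E.S, E.dn (E.pos n ω) a * E.pr n a ω

/-- indicator of being at the root -/
def Z (E : ERW G d p Ω P) (n : ℕ) (ω : Ω) : ℝ := if E.dist n ω = 0 then 1 else 0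

/-- error bound -/
def W (E : ERW G d p Ω P) (n : ℕ) (ω : Ω) : ℝ := ∑ a ∈ E.S, |E.X a n ω| / n

theorem det_dn (E : ERW G d p Ω P) (a : G) (n : ℕ) :
    E.Det n fun ω => E.dn (E.pos n ω) a := by
  intro ω ω' H
  simp only [E.pos_congr n ω ω' H]

theorem det_dist (E : ERW G d p Ω P) (n : ℕ) : E.Det n fun ω => (E.dist n ω : ℝ) := by
  intro ω ω' H
  simp only [dist, E.pos_congr n ω ω' H]

theorem det_Pr (E : ERW G d p Ω P) (n : ℕ) : E.Det n (E.Pr n) := by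
  intro ω ω' H
  simp only [Pr, E.pos_congr n ω ω' H, fun a => E.det_pr a n ω ω' H]

theorem det_Z (E : ERW G d p Ω P) (n : ℕ) : E.Det n (E.Z n) := by
  intro ω ω' H
  have h : E.dist n ω = E.dist n ω' := by simp only [dist, E.pos_congr n ω ω' H]
  simp only [Z, h]

theorem det_W (E : ERW G d p Ω P) (n : ℕ) : E.Det n (E.W n) := by
  intro ω ω' H
  simp only [W, fun a => E.det_X a n ω ω' H]

theorem det_D (E : ERW G d p Ω P) (n : ℕ) : E.Det (n + 1) (E.D n) := by
  intro ω ω' H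
  have H' : ∀ k ∈ Finset.Icc 1 n, E.g k ω = E.g k ω' :=
    fun k hk => H k (Finset.Icc_subset_Icc_right (Nat.le_succ n) hk)
  simp only [D, E.pos_congr n ω ω' H', fun a => E.det_ind a n ω ω' H]

theorem D_eq (E : ERW G d p Ω P) (n : ℕ) (ω : Ω) :
    E.D n ω = E.dn (E.pos n ω) (E.g (n + 1) ω) := by
  unfold D
  rw [Finset.sum_eq_single (E.g (n + 1) ω)]
  · simp [ind]
  · intro b _ hb
    simp [ind, hb.symm]
  · intro h
    exact absurd (E.mem_S (n + 1) (by omega) ω) h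

theorem dist_succ (E : ERW G d p Ω P) (n : ℕ) (ω : Ω) :
    (E.D n ω = 0 ∧ E.dist (n + 1) ω = E.dist n ω + 1) ∨
    (E.D n ω = 1 ∧ E.dist n ω = E.dist (n + 1) ω + 1) := by
  rw [E.D_eq]
  simp only [dist, pos, dn]
  rcases E.dist_step (E.pos n ω) (E.g (n + 1) ω) (E.mem_S (n + 1) (by omega) ω) with h | h
  · left; exact ⟨if_neg (by omega), h⟩
  · right; exact ⟨if_pos (by omega), h⟩

theorem keyD [IsProbabilityMeasure P] (E : ERW G d p Ω P) (hd : 3 ≤ d) (n : ℕ)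
    (h : Ω → ℝ) (hh : E.Det n h) :
    ∫ ω, h ω * E.D n ω ∂P = ∫ ω, h ω * E.Pr n ω ∂P := by
  rcases Nat.eq_zero_or_pos n with rfl | hn
  · congr 1
    funext ω
    have hz : ∀ a, E.dn (E.pos 0 ω) a = 0 := by
      intro a; simp [dn, pos]
    simp [D, Pr, hz]
  · have e : ∀ a, E.Det n fun ω => h ω * E.dn (E.pos n ω) a := fun a ω ω' H => by
      simp only [hh ω ω' H, E.pos_congr n ω ω' H]
    simp only [D, Pr, Finset.mul_sum, ← mul_assoc]
    rw [integral_finsetSum, integral_finsetSum]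
    · exact Finset.sum_congr rfl fun a ha => E.key hd n hn a ha _ (e a)
    · intro a _
      apply Det.integrable (E := E) (n := n)
      intro ω ω' H
      simp only [hh ω ω' H, E.pos_congr n ω ω' H, E.det_pr a n ω ω' H]
    · intro a _
      apply Det.integrable (E := E) (n := n + 1)
      intro ω ω' H
      simp only [(e a).mono (Nat.le_succ n) ω ω' H, E.det_ind a n ω ω' H]

theorem sum_dn' (E : ERW G d p Ω P) (n : ℕ) (ω : Ω) :
    ∑ a ∈ E.S, E.dn (E.pos n ω) a = 1 - E.Z n ω := by
  rw [E.sum_dn]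
  change (if E.dist n ω = 0 then (0 : ℝ) else 1) = _
  simp only [Z]
  split_ifs <;> norm_num

theorem W_nonneg (E : ERW G d p Ω P) (n : ℕ) (ω : Ω) : 0 ≤ E.W n ω :=
  Finset.sum_nonneg fun a _ => by positivity

theorem Z_nonneg (E : ERW G d p Ω P) (n : ℕ) (ω : Ω) : 0 ≤ E.Z n ω := by
  unfold Z; split_ifs <;> norm_num

theorem Pr_close (E : ERW G d p Ω P) (hd : 3 ≤ d) (hp0 : 0 ≤ p) (hp1 : p < 1)
    (n : ℕ) (ω : Ω) : |E.Pr n ω - (1 - E.Z n ω) / d| ≤ (1 - E.Z n ω) * E.W n ω := by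
  have e : E.Pr n ω - (1 - E.Z n ω) / d =
      ∑ a ∈ E.S, E.dn (E.pos n ω) a * (al d p * (E.X a n ω / n)) := by
    rw [← E.sum_dn', Finset.sum_div, Pr, ← Finset.sum_sub_distrib]
    refine Finset.sum_congr rfl fun a _ => ?_
    simp only [pr]; ring
  rw [e, ← E.sum_dn', Finset.sum_mul]
  refine (Finset.abs_sum_le_sum_abs _ _).trans (Finset.sum_le_sum fun a ha => ?_)
  rw [abs_mul, abs_of_nonneg (E.dn_nonneg _ _)]
  refine mul_le_mul_of_nonneg_left ?_ (E.dn_nonneg _ _)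
  rw [abs_mul, abs_div, Nat.abs_cast]
  have h1 : |E.X a n ω| / n ≤ E.W n ω :=
    Finset.single_le_sum (f := fun a => |E.X a n ω| / (n : ℝ)) (fun a _ => by positivity) ha
  have h2 := abs_al_le hd hp0 hp1
  have h3 : 0 ≤ |E.X a n ω| / n := by positivity
  nlinarith [abs_nonneg (al d p)]

theorem abs_Pr_le (E : ERW G d p Ω P) (hd : 3 ≤ d) (hp0 : 0 ≤ p) (hp1 : p < 1)
    (n : ℕ) (ω : Ω) : |E.Pr n ω| ≤ 2 := by
  have hd' : (3 : ℝ) ≤ d := by exact_mod_cast hd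
  have h1 : |E.Pr n ω| ≤ ∑ a ∈ E.S, E.dn (E.pos n ω) a * 2 := by
    refine (Finset.abs_sum_le_sum_abs _ _).trans (Finset.sum_le_sum fun a ha => ?_)
    rw [abs_mul, abs_of_nonneg (E.dn_nonneg _ _)]
    refine mul_le_mul_of_nonneg_left ?_ (E.dn_nonneg _ _)
    unfold pr
    have hi1 : (1 : ℝ) / d ≤ 1 / 3 := one_div_le_one_div_of_le (by norm_num) hd'
    have hi0 : (0 : ℝ) < 1 / d := by positivity
    have h3 := abs_add_le ((1 : ℝ) / d) (al d p * (E.X a n ω / n))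
    rw [abs_of_pos hi0, abs_mul] at h3
    have h2 := abs_al_le hd hp0 hp1
    have h4 := E.abs_X_div_le hd a n ω
    nlinarith [abs_nonneg (al d p), abs_nonneg (E.X a n ω / n)]
  rw [← Finset.sum_mul, E.sum_dn'] at h1
  linarith [E.Z_nonneg n ω]

/-- the martingale part -/
def M (E : ERW G d p Ω P) (n : ℕ) (ω : Ω) : ℝ := ∑ k ∈ Finset.range n, (E.D k ω - E.Pr k ω)

theorem det_M (E : ERW G d p Ω P) (n : ℕ) : E.Det n (E.M n) := by
  intro ω ω' H
  refine Finset.sum_congr rfl fun k hk => ?_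
  have hk' := Finset.mem_range.1 hk
  rw [(E.det_D k).mono hk' ω ω' H, (E.det_Pr k).mono hk'.le ω ω' H]

theorem M_sq [IsProbabilityMeasure P] (E : ERW G d p Ω P) (hd : 3 ≤ d) (hp0 : 0 ≤ p)
    (hp1 : p < 1) (n : ℕ) : ∫ ω, E.M n ω ^ 2 ∂P ≤ 9 * n := by
  induction n with
  | zero => simp [M]
  | succ n ih =>
    have dM := E.det_M n
    have d1 : E.Det n fun ω => E.M n ω ^ 2 := fun ω ω' H => by simp only [dM ω ω' H]
    have d1' : E.Det (n + 1) fun ω => E.M (n + 1) ω ^ 2 := fun ω ω' H => by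
      simp only [E.det_M (n + 1) ω ω' H]
    have d2 : E.Det n fun ω => 2 * E.M n ω := fun ω ω' H => by simp only [dM ω ω' H]
    have d3 : E.Det (n + 1) fun ω => 2 * E.M n ω * E.D n ω := fun ω ω' H => by
      simp only [dM.mono (Nat.le_succ n) ω ω' H, E.det_D n ω ω' H]
    have d4 : E.Det n fun ω => 2 * E.M n ω * E.Pr n ω := fun ω ω' H => by
      simp only [dM ω ω' H, E.det_Pr n ω ω' H]
    have h1 : ∫ ω, E.M (n + 1) ω ^ 2 ∂P ≤
        ∫ ω, (E.M n ω ^ 2 + (2 * E.M n ω * E.D n ω - 2 * E.M n ω * E.Pr n ω) + 9) ∂P := by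
      refine integral_mono d1'.integrable
        ((d1.integrable.add (d3.integrable.sub d4.integrable)).add (integrable_const _))
        fun ω => ?_
      have hD : 0 ≤ E.D n ω ∧ E.D n ω ≤ 1 := by
        rw [E.D_eq]; exact ⟨E.dn_nonneg _ _, E.dn_le_one _ _⟩
      have hP := abs_le.1 (E.abs_Pr_le hd hp0 hp1 n ω)
      have hs : (E.D n ω - E.Pr n ω) ^ 2 ≤ 9 := by nlinarith [hP.1, hP.2, hD.1, hD.2]
      have hM : E.M (n + 1) ω = E.M n ω + (E.D n ω - E.Pr n ω) := by
        simp only [M, Finset.sum_range_succ]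
      simp only [hM]
      nlinarith
    have j1 : Integrable (fun ω => 2 * E.M n ω * E.D n ω - 2 * E.M n ω * E.Pr n ω) P :=
      d3.integrable.sub d4.integrable
    have j2 : Integrable (fun ω => E.M n ω ^ 2 +
        (2 * E.M n ω * E.D n ω - 2 * E.M n ω * E.Pr n ω)) P := d1.integrable.add j1
    rw [integral_add j2 (integrable_const _), integral_add d1.integrable j1,
      integral_sub d3.integrable d4.integrable, E.keyD hd n _ d2] at h1
    simp only [sub_self, integral_const, probReal_univ, smul_eq_mul, one_mul] at h1
    push_cast
    linarith

theorem H_step [IsProbabilityMeasure P] (E : ERW G d p Ω P) (hd : 3 ≤ d) (hp0 : 0 ≤ p)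
    (hp1 : p < 1) (n : ℕ) :
    ∫ ω, (1 / ((d : ℝ) - 1)) ^ E.dist (n + 1) ω ∂P + 1 / 2 * ∫ ω, E.Z n ω ∂P ≤
      ∫ ω, (1 / ((d : ℝ) - 1)) ^ E.dist n ω ∂P + ((d : ℝ) - 1) * ∫ ω, E.W n ω ∂P := by
  have hd' : (3 : ℝ) ≤ d := by exact_mod_cast hd
  set l : ℝ := 1 / ((d : ℝ) - 1) with hl
  have hl0 : 0 < l := by rw [hl]; apply one_div_pos.2; linarith
  have hl1 : l ≤ 1 / 2 := by
    rw [hl]; exact one_div_le_one_div_of_le (by norm_num) (by linarith)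
  have hld : l * ((d : ℝ) - 1) = 1 := by
    rw [hl]; field_simp [show (d : ℝ) - 1 ≠ 0 by linarith]
  have dH : E.Det n fun ω => l ^ E.dist n ω := fun ω ω' H => by
    simp only [dist, E.pos_congr n ω ω' H]
  have d1 : E.Det n fun ω => l ^ E.dist n ω * ((d : ℝ) - 1 - l) := fun ω ω' H => by
    simp only [dH ω ω' H]
  have d2 : E.Det (n + 1) fun ω => l ^ E.dist n ω * ((d : ℝ) - 1 - l) * E.D n ω :=
    fun ω ω' H => by
      simp only [d1.mono (Nat.le_succ n) ω ω' H, E.det_D n ω ω' H]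
  have d3 : E.Det n fun ω => l ^ E.dist n ω * ((d : ℝ) - 1 - l) * E.Pr n ω :=
    fun ω ω' H => by
      simp only [d1 ω ω' H, E.det_Pr n ω ω' H]
  have iZ := (E.det_Z n).integrable
  have iW := (E.det_W n).integrable
  have e1 : ∫ ω, l ^ E.dist (n + 1) ω ∂P =
      ∫ ω, (l * l ^ E.dist n ω + l ^ E.dist n ω * ((d : ℝ) - 1 - l) * E.D n ω) ∂P := by
    congr 1
    funext ω
    rcases E.dist_succ n ω with ⟨h1, h2⟩ | ⟨h1, h2⟩
    · rw [h1, h2]; ring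
    · rw [h1, h2, pow_succ]
      linear_combination (-(l ^ E.dist (n + 1) ω)) * hld
  have j1 : Integrable (fun ω => l * l ^ E.dist n ω +
      l ^ E.dist n ω * ((d : ℝ) - 1 - l) * E.Pr n ω) P :=
    (dH.integrable.const_mul _).add d3.integrable
  rw [e1, integral_add (dH.integrable.const_mul _) d2.integrable, E.keyD hd n _ d1,
    ← integral_add (dH.integrable.const_mul _) d3.integrable, ← integral_const_mul,
    ← integral_const_mul, ← integral_add j1 (iZ.const_mul _), ← integral_add dH.integrable (iW.const_mul _)]
  refine integral_mono (j1.add (iZ.const_mul _)) (dH.integrable.add (iW.const_mul _)) fun ω => ?_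
  have hc := abs_le.1 (E.Pr_close hd hp0 hp1 n ω)
  have hW := E.W_nonneg n ω
  simp only
  by_cases hz : E.dist n ω = 0
  · have hZ : E.Z n ω = 1 := by simp [Z, hz]
    rw [hZ] at hc ⊢
    have hP : E.Pr n ω = 0 := by
      simp at hc; linarith [hc.1, hc.2]
    rw [hP, hz]
    simp only [pow_zero]
    nlinarith
  · have hZ : E.Z n ω = 0 := by simp [Z, hz]
    rw [hZ] at hc ⊢
    simp only [sub_zero, one_mul] at hc
    have hpw : l ^ E.dist n ω ≤ 1 := pow_le_one₀ hl0.le (by linarith)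
    have hpw0 : 0 < l ^ E.dist n ω := pow_pos hl0 _
    set L := l ^ E.dist n ω
    have hid : l + ((d : ℝ) - 1 - l) * (1 / d) = 1 := by
      have : (d : ℝ) ≠ 0 := by linarith
      field_simp
      linear_combination hld
    have hA : 0 ≤ (d : ℝ) - 1 - l := by linarith
    have h5 : L * ((d : ℝ) - 1 - l) * E.Pr n ω ≤
        L * ((d : ℝ) - 1 - l) * (1 / d + E.W n ω) :=
      mul_le_mul_of_nonneg_left (by linarith [hc.2]) (by positivity)
    have h6 : L * ((d : ℝ) - 1 - l) * E.W n ω ≤ ((d : ℝ) - 1) * E.W n ω := by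
      refine mul_le_mul_of_nonneg_right ?_ hW
      nlinarith
    have h7 : l * L + L * ((d : ℝ) - 1 - l) * (1 / d) = L := by
      linear_combination L * hid
    linarith

theorem Z_sum [IsProbabilityMeasure P] (E : ERW G d p Ω P) (hd : 3 ≤ d) (hp0 : 0 ≤ p)
    (hp1 : p < 1) (n : ℕ) :
    ∑ k ∈ Finset.range n, ∫ ω, E.Z k ω ∂P ≤
      2 + 2 * ((d : ℝ) - 1) * ∑ k ∈ Finset.range n, ∫ ω, E.W k ω ∂P := by
  have hd' : (3 : ℝ) ≤ d := by exact_mod_cast hd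
  have h : ∫ ω, (1 / ((d : ℝ) - 1)) ^ E.dist n ω ∂P +
      1 / 2 * ∑ k ∈ Finset.range n, ∫ ω, E.Z k ω ∂P ≤
      1 + ((d : ℝ) - 1) * ∑ k ∈ Finset.range n, ∫ ω, E.W k ω ∂P := by
    induction n with
    | zero => simp [dist, pos]
    | succ n ih =>
      have := E.H_step hd hp0 hp1 n
      rw [Finset.sum_range_succ, Finset.sum_range_succ]
      linarith
  have h0 : 0 ≤ ∫ ω, (1 / ((d : ℝ) - 1)) ^ E.dist n ω ∂P :=
    integral_nonneg fun ω => pow_nonneg (one_div_nonneg.2 (by linarith)) _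
  linarith

theorem dist_decomp (E : ERW G d p Ω P) (hd : 3 ≤ d) (hp0 : 0 ≤ p) (hp1 : p < 1)
    (n : ℕ) (ω : Ω) :
    |(E.dist n ω : ℝ) - n * (((d : ℝ) - 2) / d)| ≤
      2 * |E.M n ω| + ∑ k ∈ Finset.range n, (2 / d * E.Z k ω + 2 * E.W k ω) := by
  have hd' : (3 : ℝ) ≤ d := by exact_mod_cast hd
  have hd0 : (d : ℝ) ≠ 0 := by linarith
  have e : (E.dist n ω : ℝ) - n * (((d : ℝ) - 2) / d) = -2 * E.M n ω +
      ∑ k ∈ Finset.range n, (2 / d * E.Z k ω - 2 * (E.Pr k ω - (1 - E.Z k ω) / d)) := by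
    induction n with
    | zero => simp [dist, pos, M]
    | succ n ih =>
      have hM : E.M (n + 1) ω = E.M n ω + (E.D n ω - E.Pr n ω) := by
        simp only [M, Finset.sum_range_succ]
      have hs : (E.dist (n + 1) ω : ℝ) = E.dist n ω + 1 - 2 * E.D n ω := by
        rcases E.dist_succ n ω with ⟨h1, h2⟩ | ⟨h1, h2⟩
        · rw [h1, h2]; push_cast; ring
        · rw [h1, h2]; push_cast; ring
      rw [hM, hs, Finset.sum_range_succ]
      have hq : ((d : ℝ) - 2) / d = 1 - 2 / d := by field_simp
      rw [hq] at ih ⊢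
      push_cast
      linear_combination ih
  rw [e]
  refine (abs_add_le _ _).trans (add_le_add ?_ ?_)
  · rw [abs_mul]; norm_num
  · refine (Finset.abs_sum_le_sum_abs _ _).trans (Finset.sum_le_sum fun k _ => ?_)
    refine (abs_sub _ _).trans ?_
    rw [abs_mul 2, abs_of_nonneg (a := 2 / d * E.Z k ω)
      (mul_nonneg (by positivity) (E.Z_nonneg k ω)), abs_of_pos (two_pos (α := ℝ))]
    have h1 := E.Pr_close hd hp0 hp1 k ω
    nlinarith [E.Z_nonneg k ω, E.W_nonneg k ω]

theorem integral_dist_le [IsProbabilityMeasure P] (E : ERW G d p Ω P) (hd : 3 ≤ d)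
    (hp0 : 0 ≤ p) (hp1 : p < 1) (n : ℕ) (hn : 1 ≤ n) :
    ∫ ω, |(E.dist n ω : ℝ) - n * (((d : ℝ) - 2) / d)| ∂P ≤
      6 * Real.sqrt n + 2 + 6 * ∑ k ∈ Finset.range n, ∫ ω, E.W k ω ∂P := by
  have hd' : (3 : ℝ) ≤ d := by exact_mod_cast hd
  have hn' : (1 : ℝ) ≤ n := by exact_mod_cast hn
  have d0 : E.Det n fun ω => |(E.dist n ω : ℝ) - n * (((d : ℝ) - 2) / d)| :=
    fun ω ω' H => by simp only [E.det_dist n ω ω' H]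
  have iM := (E.det_M n).integrable.abs
  have iZ : ∀ k, Integrable (E.Z k) P := fun k => (E.det_Z k).integrable
  have iW : ∀ k, Integrable (E.W k) P := fun k => (E.det_W k).integrable
  have iS : ∀ k, Integrable (fun ω => 2 / (d : ℝ) * E.Z k ω + 2 * E.W k ω) P :=
    fun k => ((iZ k).const_mul _).add ((iW k).const_mul _)
  have h1 := integral_mono d0.integrable
    ((iM.const_mul 2).add (integrable_finsetSum (Finset.range n) fun k _ => iS k))
    (E.dist_decomp hd hp0 hp1 n)
  have e : ∫ ω, ((fun ω => 2 * |E.M n ω|) +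
      fun ω => ∑ k ∈ Finset.range n, (2 / (d : ℝ) * E.Z k ω + 2 * E.W k ω)) ω ∂P =
      2 * ∫ ω, |E.M n ω| ∂P + (2 / d * ∑ k ∈ Finset.range n, ∫ ω, E.Z k ω ∂P +
        2 * ∑ k ∈ Finset.range n, ∫ ω, E.W k ω ∂P) := by
    simp only [Pi.add_apply]
    rw [integral_add (iM.const_mul 2) (integrable_finsetSum _ fun k _ => iS k),
      integral_const_mul, integral_finsetSum _ fun k _ => iS k, Finset.mul_sum, Finset.mul_sum,
      ← Finset.sum_add_distrib]
    congr 1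
    refine Finset.sum_congr rfl fun k _ => ?_
    rw [integral_add ((iZ k).const_mul _) ((iW k).const_mul _), integral_const_mul,
      integral_const_mul]
  have h2 : ∫ ω, |E.M n ω| ∂P ≤ 3 * Real.sqrt n := by
    apply integral_abs_le (E.det_M n) _ (by positivity)
    rw [mul_pow, Real.sq_sqrt (by positivity)]
    have := E.M_sq hd hp0 hp1 n
    linarith
  have h3 := E.Z_sum hd hp0 hp1 n
  set SW := ∑ k ∈ Finset.range n, ∫ ω, E.W k ω ∂P
  have hSW : 0 ≤ SW := Finset.sum_nonneg fun k _ => integral_nonneg (E.W_nonneg k)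
  have h4 : 2 / (d : ℝ) * ∑ k ∈ Finset.range n, ∫ ω, E.Z k ω ∂P ≤
      2 / d * (2 + 2 * ((d : ℝ) - 1) * SW) := mul_le_mul_of_nonneg_left h3 (by positivity)
  have h5 : 2 / (d : ℝ) * (2 + 2 * ((d : ℝ) - 1) * SW) ≤ 2 + 4 * SW := by
    rw [div_mul_eq_mul_div, div_le_iff₀ (by linarith)]
    nlinarith
  calc _ ≤ _ := h1
    _ = _ := e
    _ ≤ _ := by linarith

theorem W_le [IsProbabilityMeasure P] (E : ERW G d p Ω P) (k : ℕ) (c : ℝ) (hc : 0 < c)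
    (hv : ∀ a ∈ E.S, ∫ ω, E.X a k ω ^ 2 ∂P ≤ c ^ 2) :
    ∫ ω, E.W k ω ∂P ≤ d * (c / k) := by
  unfold W
  rw [integral_finsetSum _ fun a _ => (E.det_X a k).integrable.abs.div_const _]
  calc _ ≤ ∑ a ∈ E.S, c / k := by
        refine Finset.sum_le_sum fun a ha => ?_
        rw [integral_div]
        exact div_le_div_of_nonneg_right
          (integral_abs_le (E.det_X a k) c hc (hv a ha)) (by positivity)
    _ = d * (c / k) := by rw [Finset.sum_const, E.card_S, nsmul_eq_mul]

/-! ### Deterministic sequences -/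

theorem seq_sub (α : ℝ) (h1 : -(1 / 2) ≤ α) (h2 : α < 1 / 2) (v : ℕ → ℝ) (hv1 : v 1 ≤ 1)
    (hv : ∀ n : ℕ, 1 ≤ n → v (n + 1) ≤ (1 + 2 * α / n) * v n + 2) :
    ∀ n : ℕ, 1 ≤ n → v n ≤ 2 / (1 - 2 * α) * n := by
  have hC0 : 0 < 1 - 2 * α := by linarith
  have hC : 2 / (1 - 2 * α) * (1 - 2 * α) = 2 := by field_simp
  have hC1 : 1 ≤ 2 / (1 - 2 * α) := by rw [le_div_iff₀ hC0]; linarith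
  set C := 2 / (1 - 2 * α)
  intro n hn
  induction n, hn using Nat.le_induction with
  | base => simpa using hv1.trans hC1
  | succ n hn ih =>
    have hn' : (1 : ℝ) ≤ n := by exact_mod_cast hn
    have h3 : 0 ≤ 1 + 2 * α / n := by
      have : -1 ≤ 2 * α / n := by rw [le_div_iff₀ (by linarith)]; linarith
      linarith
    have h4 := mul_le_mul_of_nonneg_left ih h3
    have h5 : (1 + 2 * α / n) * (C * n) = C * n + 2 * α * C := by field_simp
    have := hv n hn
    push_cast
    linarith

theorem seq_crit (v : ℕ → ℝ) (hv1 : v 1 ≤ 1)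
    (hv : ∀ n : ℕ, 1 ≤ n → v (n + 1) ≤ (1 + 2 * (1 / 2) / n) * v n + 2) :
    ∀ n : ℕ, 1 ≤ n → v n ≤ 2 * n * (1 + Real.log n) := by
  have h : ∀ n : ℕ, 1 ≤ n → v n ≤ 2 * n * ((harmonic n : ℚ) : ℝ) := by
    intro n hn
    induction n, hn using Nat.le_induction with
    | base => norm_num [harmonic]; linarith
    | succ n hn ih =>
      have hn' : (1 : ℝ) ≤ n := by exact_mod_cast hn
      have h3 : 0 ≤ 1 + 2 * (1 / 2) / (n : ℝ) := by positivity
      have h4 := mul_le_mul_of_nonneg_left ih h3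
      rw [harmonic_succ]
      push_cast
      have h5 : 2 * ((n : ℝ) + 1) * (((harmonic n : ℚ) : ℝ) + ((n : ℝ) + 1)⁻¹) =
        (1 + 2 * (1 / 2) / (n : ℝ)) * (2 * n * ((harmonic n : ℚ) : ℝ)) + 2 := by
        field_simp
      have := hv n hn
      linarith
  intro n hn
  refine (h n hn).trans ?_
  have := harmonic_le_one_add_log n
  exact mul_le_mul_of_nonneg_left this (by positivity)

theorem seq_super (α : ℝ) (h1 : 1 / 2 < α) (v : ℕ → ℝ) (hv1 : v 1 ≤ 1)
    (hv : ∀ n : ℕ, 1 ≤ n → v (n + 1) ≤ (1 + 2 * α / n) * v n + 2) :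
    ∀ n : ℕ, 1 ≤ n → v n ≤ (1 + 2 / (2 * α - 1)) * (n : ℝ) ^ (2 * α) := by
  have hB0 : 0 < 2 * α - 1 := by linarith
  have hB : 2 / (2 * α - 1) * (2 * α - 1) = 2 := by field_simp
  have hBp : 0 < 2 / (2 * α - 1) := by positivity
  set B := 2 / (2 * α - 1)
  have h : ∀ n : ℕ, 1 ≤ n → v n ≤ (1 + B) * (n : ℝ) ^ (2 * α) - B * n := by
    intro n hn
    induction n, hn using Nat.le_induction with
    | base => simpa using hv1
    | succ n hn ih =>
      have hn' : (1 : ℝ) ≤ n := by exact_mod_cast hn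
      have hn0 : (0 : ℝ) < n := by linarith
      have h3 : 0 ≤ 1 + 2 * α / (n : ℝ) := by positivity
      have h4 := mul_le_mul_of_nonneg_left ih h3
      have h5 : (1 + 2 * α / n) * (n : ℝ) ^ (2 * α) ≤ ((n : ℝ) + 1) ^ (2 * α) := by
        have hb := one_add_mul_self_le_rpow_one_add (s := 1 / (n : ℝ)) (p := 2 * α)
          (by have : 0 < 1 / (n : ℝ) := by positivity
              linarith) (by linarith)
        have e : ((n : ℝ) + 1) = (1 + 1 / n) * n := by field_simp
        rw [e, Real.mul_rpow (by positivity) hn0.le]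
        refine mul_le_mul_of_nonneg_right ?_ (by positivity)
        calc 1 + 2 * α / n = 1 + 2 * α * (1 / n) := by ring
          _ ≤ _ := hb
      have h6 : (1 + 2 * α / n) * (B * n) = B * n + 2 * α * B := by field_simp
      have h7 := mul_le_mul_of_nonneg_left h5 (show 0 ≤ 1 + B by linarith)
      have := hv n hn
      push_cast
      nlinarith
  intro n hn
  have hn0 : (0 : ℝ) ≤ n := by positivity
  nlinarith [h n hn]

theorem sum_rpow (α : ℝ) (h0 : 0 < α) (h1 : α ≤ 1) (n : ℕ) :
    ∑ k ∈ Finset.range n, ((k : ℝ) + 1) ^ (α - 1) ≤ (n : ℝ) ^ α / α := by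
  induction n with
  | zero => simp [Real.zero_rpow h0.ne']
  | succ n ih =>
    rw [Finset.sum_range_succ]
    have hn : (0 : ℝ) < (n : ℝ) + 1 := by positivity
    have hb := rpow_one_add_le_one_add_mul_self (s := -(1 / ((n : ℝ) + 1))) (p := α)
      (by have : 1 / ((n : ℝ) + 1) ≤ 1 := by
            rw [div_le_one hn]; linarith [Nat.cast_nonneg (α := ℝ) n]
          linarith) h0.le h1
    have e : (n : ℝ) = (1 + -(1 / ((n : ℝ) + 1))) * ((n : ℝ) + 1) := by field_simp; ring
    have h2 : (n : ℝ) ^ α ≤ (1 + α * -(1 / ((n : ℝ) + 1))) * ((n : ℝ) + 1) ^ α := by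
      have h3 : (0 : ℝ) ≤ 1 + -(1 / ((n : ℝ) + 1)) := by
        have : 1 / ((n : ℝ) + 1) ≤ 1 := by
            rw [div_le_one hn]; linarith [Nat.cast_nonneg (α := ℝ) n]
        linarith
      have h4 := mul_le_mul_of_nonneg_right hb (show 0 ≤ ((n : ℝ) + 1) ^ α by positivity)
      rw [← Real.mul_rpow h3 hn.le, ← e] at h4
      exact h4
    have h5 : ((n : ℝ) + 1) ^ (α - 1) = ((n : ℝ) + 1) ^ α / ((n : ℝ) + 1) := by
      rw [Real.rpow_sub hn, Real.rpow_one]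
    have h6 : (n : ℝ) ^ α / α ≤ ((n : ℝ) + 1) ^ α / α - ((n : ℝ) + 1) ^ α / ((n : ℝ) + 1) := by
      rw [div_le_iff₀ h0]
      calc _ ≤ _ := h2
        _ = _ := by field_simp; ring
    rw [h5]
    push_cast
    linarith

/-- sums of `k^(α-1)` over `1 ≤ k < n`, in the form in which they occur -/
theorem sum_le_of_bound (α A : ℝ) (h0 : 0 < α) (h1 : α ≤ 1) (hA : 0 ≤ A) (n : ℕ) (f : ℕ → ℝ)
    (hf0 : f 0 ≤ 0) (hf : ∀ k, 1 ≤ k → k < n → f k ≤ A * (k : ℝ) ^ (α - 1)) :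
    ∑ k ∈ Finset.range n, f k ≤ A * ((n : ℝ) ^ α / α) := by
  cases n with
  | zero => simp [Real.zero_rpow h0.ne']
  | succ m =>
    rw [Finset.sum_range_succ']
    have h2 : ∑ k ∈ Finset.range m, f (k + 1) ≤
        ∑ k ∈ Finset.range m, A * ((k : ℝ) + 1) ^ (α - 1) := by
      refine Finset.sum_le_sum fun k hk => ?_
      have := hf (k + 1) (by omega) (by have := Finset.mem_range.1 hk; omega)
      push_cast at this
      exact this
    rw [← Finset.mul_sum] at h2
    have h3 := mul_le_mul_of_nonneg_left (sum_rpow α h0 h1 m) hA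
    have h4 : (m : ℝ) ^ α / α ≤ ((m + 1 : ℕ) : ℝ) ^ α / α := by
      apply div_le_div_of_nonneg_right _ h0.le
      apply Real.rpow_le_rpow (by positivity) _ h0.le
      push_cast; linarith
    have h5 := mul_le_mul_of_nonneg_left h4 hA
    linarith

theorem W_zero (E : ERW G d p Ω P) : ∫ ω, E.W 0 ω ∂P ≤ 0 := by
  simp [W]

/-- `√A k^α / k = √A k^(α-1)` -/
theorem rpow_div_self (α c : ℝ) (k : ℕ) (hk : 1 ≤ k) :
    c * (k : ℝ) ^ α / k = c * (k : ℝ) ^ (α - 1) := by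
  have : (0 : ℝ) < k := by exact_mod_cast hk
  rw [Real.rpow_sub this, Real.rpow_one, mul_div_assoc]

/-- main moment bound: with `v k ≤ A k^(2α)` for `k < n` -/
theorem integral_dist_le' [IsProbabilityMeasure P] (E : ERW G d p Ω P) (hd : 3 ≤ d)
    (hp0 : 0 ≤ p) (hp1 : p < 1) (n : ℕ) (hn : 1 ≤ n) (β A : ℝ) (hβ0 : 1 / 2 ≤ β) (hβ1 : β ≤ 1)
    (hA : 1 ≤ A)
    (hv : ∀ k : ℕ, 1 ≤ k → k < n → ∀ a ∈ E.S,
      ∫ ω, E.X a k ω ^ 2 ∂P ≤ A * (k : ℝ) ^ (2 * β)) :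
    ∫ ω, |(E.dist n ω : ℝ) - n * (((d : ℝ) - 2) / d)| ∂P ≤
      (8 + 12 * d) * (Real.sqrt A * (n : ℝ) ^ β) := by
  have h := E.integral_dist_le hd hp0 hp1 n hn
  have hn' : (1 : ℝ) ≤ n := by exact_mod_cast hn
  have hsA : 1 ≤ Real.sqrt A := Real.one_le_sqrt.2 hA
  have h1 : ∑ k ∈ Finset.range n, ∫ ω, E.W k ω ∂P ≤
      (d * Real.sqrt A) * ((n : ℝ) ^ β / β) := by
    apply sum_le_of_bound β _ (by linarith) hβ1 (by positivity) n _ E.W_zero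
    intro k hk hkn
    have hk' : (0 : ℝ) < k := by exact_mod_cast hk
    have := E.W_le k (Real.sqrt A * (k : ℝ) ^ β) (by positivity) (fun a ha => by
      rw [mul_pow, Real.sq_sqrt (by linarith), ← Real.rpow_natCast, ← Real.rpow_mul hk'.le]
      refine (hv k hk hkn a ha).trans_eq ?_
      congr 2; push_cast; ring)
    rw [rpow_div_self _ _ _ hk] at this
    linarith
  have h2 : (n : ℝ) ^ β / β ≤ 2 * (n : ℝ) ^ β := by
    rw [div_le_iff₀ (by linarith)]
    have : 0 ≤ (n : ℝ) ^ β := by positivity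
    nlinarith
  have h3 : Real.sqrt n ≤ (n : ℝ) ^ β := by
    rw [Real.sqrt_eq_rpow]
    exact Real.rpow_le_rpow_of_exponent_le hn' hβ0
  have h4 : 1 ≤ (n : ℝ) ^ β := Real.one_le_rpow hn' (by linarith)
  have h5 : (n : ℝ) ^ β ≤ Real.sqrt A * (n : ℝ) ^ β := le_mul_of_one_le_left (by linarith) hsA
  have h6 := mul_le_mul_of_nonneg_left h2 (show 0 ≤ (d : ℝ) * Real.sqrt A by positivity)
  nlinarith

theorem al_crit (hd : 3 ≤ d) : (al d p < 1 / 2 ↔ p < ((d : ℝ) + 1) / (2 * d)) ∧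
    (al d p = 1 / 2 ↔ p = ((d : ℝ) + 1) / (2 * d)) := by
  have hd' : (3 : ℝ) ≤ d := by exact_mod_cast hd
  have h1 : (0 : ℝ) < d - 1 := by linarith
  have h2 : (0 : ℝ) < 2 * d := by linarith
  unfold al
  rw [div_lt_iff₀ h1, lt_div_iff₀ h2, div_eq_iff h1.ne', eq_div_iff h2.ne']
  constructor
  · constructor <;> intro h <;> linarith
  · constructor <;> intro h <;> linarith

/-- the normalised first moment is bounded -/
theorem rate_bound [IsProbabilityMeasure P] (E : ERW G d p Ω P) (hd : 3 ≤ d)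
    (hp0 : 0 ≤ p) (hp1 : p < 1) :
    ∃ C : ℝ, 0 < C ∧ ∀ n : ℕ, 1 ≤ n →
      rate p d n / n * ∫ ω, |(E.dist n ω : ℝ) - n * (((d : ℝ) - 2) / d)| ∂P ≤ C := by
  have hd' : (3 : ℝ) ≤ d := by exact_mod_cast hd
  have hc := al_crit (d := d) (p := p) hd
  have hstep := fun (a : G) (ha : a ∈ E.S) (n : ℕ) (hn : 1 ≤ n) =>
    E.X_sq_step hd hp0 hp1 n hn a ha
  have hone := fun a : G => E.X_sq_one hd a
  have hal1 := al_lt_one hd hp1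
  have hal0 := neg_half_le_al hd hp0
  rcases lt_trichotomy (al d p) (1 / 2) with h | h | h
  · set A := 2 / (1 - 2 * al d p) with hA
    have hA1 : 1 ≤ A := by rw [hA, le_div_iff₀ (by linarith)]; linarith
    refine ⟨(8 + 12 * d) * Real.sqrt A, by positivity, fun n hn => ?_⟩
    have hn' : (1 : ℝ) ≤ n := by exact_mod_cast hn
    have hb := E.integral_dist_le' hd hp0 hp1 n hn (1 / 2) A le_rfl (by norm_num) hA1
      (fun k hk _ a ha => by
        have := seq_sub (al d p) hal0 h (fun n => ∫ ω, E.X a n ω ^ 2 ∂P) (hone a)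
          (hstep a ha) k hk
        simpa using this)
    rw [rate, if_pos (hc.1.1 h)]
    refine (mul_le_mul_of_nonneg_left hb (by positivity)).trans_eq ?_
    rw [← Real.sqrt_eq_rpow]
    have hs : Real.sqrt n * Real.sqrt n = n := Real.mul_self_sqrt (by positivity)
    field_simp
    linear_combination hs
  · refine ⟨(8 + 12 * d) * Real.sqrt 6, by positivity, fun n hn => ?_⟩
    have hn' : (1 : ℝ) ≤ n := by exact_mod_cast hn
    rw [rate, if_neg (by rw [← hc.1]; linarith), if_pos (hc.2.1 h)]
    rcases Nat.lt_or_ge n 2 with h2 | h2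
    · have : n = 1 := by omega
      subst this
      simp
      positivity
    have hlog0 : 0 ≤ Real.log n := Real.log_nonneg hn'
    have h2' : (2 : ℝ) ≤ n := by exact_mod_cast h2
    have hlog : 1 / 2 ≤ Real.log n := by
      have := Real.log_two_gt_d9
      have := Real.log_le_log (by norm_num) h2'
      linarith
    have hb := E.integral_dist_le' hd hp0 hp1 n hn (1 / 2) (2 * (1 + Real.log n)) le_rfl
      (by norm_num) (by linarith)
      (fun k hk hkn a ha => by
        have := seq_crit (fun n => ∫ ω, E.X a n ω ^ 2 ∂P) (hone a)
          (by rw [← h]; exact hstep a ha) k hk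
        have hk' : (0 : ℝ) < k := by exact_mod_cast hk
        have hl : Real.log k ≤ Real.log n := Real.log_le_log hk' (by exact_mod_cast hkn.le)
        have e : (k : ℝ) ^ (2 * (1 / 2 : ℝ)) = k := by norm_num
        rw [e]
        nlinarith)
    refine (mul_le_mul_of_nonneg_left hb (by positivity)).trans ?_
    rw [← Real.sqrt_eq_rpow]
    have hs : Real.sqrt (2 * (1 + Real.log n)) ≤ Real.sqrt 6 * Real.sqrt (Real.log n) := by
      rw [← Real.sqrt_mul (by norm_num)]
      exact Real.sqrt_le_sqrt (by linarith)
    have hq : 0 < Real.sqrt (Real.log n) := Real.sqrt_pos.2 (by linarith)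
    have hsn : Real.sqrt n * Real.sqrt n = n := Real.mul_self_sqrt (by positivity)
    rw [Real.sqrt_div (by positivity)]
    have hn0 : (0 : ℝ) < n := by linarith
    calc Real.sqrt n / Real.sqrt (Real.log n) / n *
          ((8 + 12 * d) * (Real.sqrt (2 * (1 + Real.log n)) * Real.sqrt n))
        ≤ Real.sqrt n / Real.sqrt (Real.log n) / n *
          ((8 + 12 * d) * ((Real.sqrt 6 * Real.sqrt (Real.log n)) * Real.sqrt n)) := by
          gcongr
      _ = (8 + 12 * d) * Real.sqrt 6 * (Real.sqrt n * Real.sqrt n / n) := by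
          field_simp
      _ = _ := by rw [hsn, div_self hn0.ne', mul_one]
  · set A := 1 + 2 / (2 * al d p - 1) with hA
    have hA1 : 1 ≤ A := by
      have : 0 < 2 / (2 * al d p - 1) := div_pos two_pos (by linarith)
      linarith
    refine ⟨(8 + 12 * d) * Real.sqrt A, by positivity, fun n hn => ?_⟩
    have hn' : (1 : ℝ) ≤ n := by exact_mod_cast hn
    have hn0 : (0 : ℝ) < n := by linarith
    have hb := E.integral_dist_le' hd hp0 hp1 n hn (al d p) A h.le hal1.le hA1
      (fun k hk _ a ha =>
        seq_super (al d p) h (fun n => ∫ ω, E.X a n ω ^ 2 ∂P) (hone a) (hstep a ha) k hk)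
    rw [rate, if_neg (by rw [← hc.1]; linarith), if_neg (by rw [← hc.2]; exact h.ne')]
    have hexp : (d : ℝ) * (1 - p) / ((d : ℝ) - 1) = 1 - al d p := by
      unfold al
      have : (d : ℝ) - 1 ≠ 0 := by linarith
      field_simp
      ring
    rw [hexp]
    refine (mul_le_mul_of_nonneg_left hb (by positivity)).trans_eq ?_
    have e : (n : ℝ) ^ (1 - al d p) * (n : ℝ) ^ (al d p) = n := by
      rw [← Real.rpow_add hn0]; simp
    calc _ = (8 + 12 * d) * Real.sqrt A *
          ((n : ℝ) ^ (1 - al d p) * (n : ℝ) ^ (al d p) / n) := by ring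
      _ = _ := by rw [e, div_self hn0.ne', mul_one]

theorem rate_nonneg (n : ℕ) : 0 ≤ rate p d n := by
  unfold rate
  split_ifs <;> positivity

theorem tight_aux [IsProbabilityMeasure P] (E : ERW G d p Ω P) (hd : 3 ≤ d)
    (hp0 : 0 ≤ p) (hp1 : p < 1) :
    ∀ ε : ℝ, 0 < ε → ∃ K : ℝ, 0 < K ∧ ∀ n : ℕ, 1 ≤ n →
      (P {ω | K < |rate p d n * ((E.dist n ω : ℝ) / n - ((d : ℝ) - 2) / d)|}).toReal
        < ε := by
  intro ε hε
  obtain ⟨C, hC, hb⟩ := E.rate_bound hd hp0 hp1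
  refine ⟨2 * C / ε, by positivity, fun n hn => ?_⟩
  have hn0 : (0 : ℝ) < n := by exact_mod_cast hn
  set f : Ω → ℝ := fun ω => |rate p d n * ((E.dist n ω : ℝ) / n - ((d : ℝ) - 2) / d)| with hf
  have df : E.Det n f := fun ω ω' H => by simp only [hf, E.det_dist n ω ω' H]
  have e : ∫ ω, f ω ∂P ≤ C := by
    have : ∀ ω, f ω = rate p d n / n * |(E.dist n ω : ℝ) - n * (((d : ℝ) - 2) / d)| := by
      intro ω
      have h1 : rate p d n * ((E.dist n ω : ℝ) / n - ((d : ℝ) - 2) / d) =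
          rate p d n / n * ((E.dist n ω : ℝ) - n * (((d : ℝ) - 2) / d)) := by
        field_simp
      simp only [hf]
      rw [h1, abs_mul, abs_of_nonneg (div_nonneg (rate_nonneg n) hn0.le)]
    simp only [this]
    rw [integral_const_mul]
    exact hb n hn
  have hm := mul_meas_ge_le_integral_of_nonneg (μ := P)
    (Filter.Eventually.of_forall fun ω => abs_nonneg _) df.integrable (2 * C / ε)
  have hle : (P {ω | 2 * C / ε < f ω}).toReal ≤ P.real {ω | 2 * C / ε ≤ f ω} :=
    measureReal_mono (μ := P) (Set.setOf_subset_setOf.2 fun ω h => h.le)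
  have h1 : 2 * C / ε * (P {ω | 2 * C / ε < f ω}).toReal ≤ C :=
    (mul_le_mul_of_nonneg_left hle (by positivity)).trans (hm.trans e)
  have h2 : (P {ω | 2 * C / ε < f ω}).toReal ≤ ε / 2 := by
    rw [div_mul_eq_mul_div, div_le_iff₀ hε] at h1
    nlinarith
  linarith

end aux

end ERW

/-- the sequence `r n * (Δ n / n - (d-2)/d)` is tight: for every
`ε > 0` there is `K > 0` such that `P(|r n (Δ n / n - (d-2)/d)| > K) < ε` for
all `n ≥ 1`. -/
theorem erw_tightness
    {G : Type*} [Group G] [DecidableEq G] {Ω : Type*} [MeasurableSpace Ω]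
    {P : Measure Ω} [IsProbabilityMeasure P]
    (d : ℕ) (hd : 3 ≤ d) (p : ℝ) (hp0 : 0 ≤ p) (hp1 : p < 1)
    (E : ERW G d p Ω P) :
    ∀ ε : ℝ, 0 < ε → ∃ K : ℝ, 0 < K ∧ ∀ n : ℕ, 1 ≤ n →
      (P {ω | K < |rate p d n * ((E.dist n ω : ℝ) / n - ((d : ℝ) - 2) / d)|}).toReal
        < ε := by
  exact E.tight_aux hd hp0 hp1

end
end

section
/- For the elephant random walk with memory parameter p on a Cayley graph that is the d-regular tree T_d (d ≥ 3), if 0 ≤ p < 1/2 and (p, d) ≠ (0, 3), then the return probability satisfies P(Δ_n = 0) ≤ exp(−n α_{p,d}² / 8) for all n ≥ 1, where α_{p,d} = 1 − 2(1 − p)/(d − 1) if 0 ≤ p ≤ 1/d and α_{p,d} = 1 − 2p if 1/d < p < 1/2. -/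
open MeasureTheory ProbabilityTheory Filter

noncomputable section

namespace ERWProof

lemma tree_unique {V : Type*} {H : SimpleGraph V} (hT : H.IsTree) {u x y z : V}
    (hy : H.Adj y x) (hz : H.Adj z x)
    (h1 : H.dist u x = H.dist u y + 1) (h2 : H.dist u x = H.dist u z + 1) : y = z := by
  obtain ⟨p, hp⟩ := hT.connected.exists_walk_length_eq_dist u y
  obtain ⟨q, hq⟩ := hT.connected.exists_walk_length_eq_dist u z
  have hp1 : (p.concat hy).IsPath :=
    SimpleGraph.Walk.isPath_of_length_eq_dist _ (by simp [hp, h1])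
  have hq1 : (q.concat hz).IsPath :=
    SimpleGraph.Walk.isPath_of_length_eq_dist _ (by simp [hq, h2])
  have := (hT.existsUnique_path u x).unique hp1 hq1
  have h3 := congrArg SimpleGraph.Walk.penultimate this
  simpa using h3

lemma exists_gamma {G : Type*} [Group G] (S : Finset G) (h1 : (1 : G) ∉ S)
    (hT : (cayleyGraph S).IsTree) (x : G) :
    ∃ γ : G, ∀ a ∈ S, (cayleyGraph S).dist 1 x ≤ (cayleyGraph S).dist 1 (a * x) + 1 ∧
      (a ≠ γ → (cayleyGraph S).dist 1 x + 1 ≤ (cayleyGraph S).dist 1 (a * x)) := by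
  have hadj : ∀ a ∈ S, (cayleyGraph S).Adj (a * x) x := by
    intro a ha
    refine ⟨?_, Or.inr (by simpa using ha)⟩
    intro h
    have : a = 1 := by simpa using h
    exact h1 (this ▸ ha)
  have hd : ∀ a ∈ S, _ := fun a ha => hT.dist_eq_dist_add_one_of_adj 1 (hadj a ha)
  by_cases hex : ∃ γ ∈ S, (cayleyGraph S).dist 1 x = (cayleyGraph S).dist 1 (γ * x) + 1
  · obtain ⟨γ, hγ, hγd⟩ := hex
    refine ⟨γ, fun a ha => ⟨?_, fun hne => ?_⟩⟩
    · rcases hd a ha with h | h <;> omega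
    · rcases hd a ha with h | h
      · omega
      · exact absurd (mul_right_cancel (tree_unique hT (hadj a ha) (hadj γ hγ) h hγd)) hne
  · refine ⟨1, fun a ha => ?_⟩
    rcases hd a ha with h | h
    · exact ⟨by omega, fun _ => by omega⟩
    · exact absurd ⟨a, ha, h⟩ hex

lemma step_bound {G : Type*} [DecidableEq G] (S : Finset G) (w : G → ℝ) (D : G → ℕ) (D0 : ℕ)
    (γ : G) (q x c : ℝ) (hw0 : ∀ a ∈ S, 0 ≤ w a) (hwq : ∀ a ∈ S, w a ≤ q)
    (hsum : ∑ a ∈ S, w a = 1) (hq0 : 0 ≤ q) (hx0 : 0 < x) (hx1 : x ≤ 1)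
    (hc : c * x = q + (1 - q) * x ^ 2)
    (hD : ∀ a ∈ S, D0 ≤ D a + 1 ∧ (a ≠ γ → D0 + 1 ≤ D a)) :
    ∑ a ∈ S, w a * x ^ D a ≤ c * x ^ D0 := by
  have hx2 : x ^ 2 ≤ 1 := pow_le_one₀ hx0.le hx1
  have key : ∀ a ∈ S, w a * x ^ D a * x ≤
      x ^ D0 * (w a * x ^ 2 + (if a = γ then q * (1 - x ^ 2) else 0)) := by
    intro a ha
    have hwa := hw0 a ha
    split_ifs with h
    · have h1 : x ^ D a * x ≤ x ^ D0 := by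
        rw [← pow_succ]; exact pow_le_pow_of_le_one hx0.le hx1 (hD a ha).1
      have h2 := hwq a ha
      calc w a * x ^ D a * x = w a * (x ^ D a * x) := by ring
        _ ≤ w a * x ^ D0 := by gcongr
        _ = x ^ D0 * (w a * x ^ 2 + w a * (1 - x ^ 2)) := by ring
        _ ≤ _ := by
          have : 0 ≤ 1 - x ^ 2 := by linarith
          gcongr
    · have h1 : x ^ D a ≤ x ^ (D0 + 1) := pow_le_pow_of_le_one hx0.le hx1 ((hD a ha).2 h)
      calc w a * x ^ D a * x ≤ w a * x ^ (D0 + 1) * x := by gcongr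
        _ = _ := by ring
  have h3 : (∑ a ∈ S, w a * x ^ D a) * x ≤ (c * x ^ D0) * x := by
    calc (∑ a ∈ S, w a * x ^ D a) * x ≤
        ∑ a ∈ S, x ^ D0 * (w a * x ^ 2 + (if a = γ then q * (1 - x ^ 2) else 0)) := by
          rw [Finset.sum_mul]; exact Finset.sum_le_sum key
      _ = x ^ D0 * (x ^ 2 + (if γ ∈ S then q * (1 - x ^ 2) else 0)) := by
          rw [← Finset.mul_sum, Finset.sum_add_distrib, ← Finset.sum_mul, hsum, one_mul,
            Finset.sum_ite_eq']
      _ ≤ x ^ D0 * (x ^ 2 + q * (1 - x ^ 2)) := by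
          have : 0 ≤ q * (1 - x ^ 2) := mul_nonneg hq0 (by linarith)
          gcongr
          split_ifs <;> linarith
      _ = x ^ D0 * (q + (1 - q) * x ^ 2) := by ring
      _ = _ := by rw [← hc]; ring
  exact le_of_mul_le_mul_right h3 hx0

/-- Position after the deterministic steps `s 1, …, s n`. -/
def posS {G : Type*} [Group G] (s : ℕ → G) : ℕ → G
  | 0 => 1
  | n + 1 => s (n + 1) * posS s n

lemma posS_congr {G : Type*} [Group G] (s t : ℕ → G) (n : ℕ)
    (h : ∀ k ∈ Finset.Icc 1 n, s k = t k) : posS s n = posS t n := by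
  induction n with
  | zero => rfl
  | succ n ih =>
    simp only [posS]
    rw [h (n + 1) (by simp), ih]
    intro k hk
    apply h
    simp only [Finset.mem_Icc] at hk ⊢
    omega

variable {G : Type*} [Group G] [DecidableEq G] {d : ℕ} {p : ℝ}
  {Ω : Type*} [MeasurableSpace Ω] {P : Measure Ω}

/-- The event that the first `n` steps are `s 1, …, s n`. -/
def hist (E : ERW G d p Ω P) (s : ℕ → G) (n : ℕ) : Set Ω :=
  {ω | ∀ k ∈ Finset.Icc 1 n, E.g k ω = s k}

lemma pos_eq (E : ERW G d p Ω P) (n : ℕ) (ω : Ω) :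
    E.pos n ω = posS (fun k => E.g k ω) n := by
  induction n with
  | zero => rfl
  | succ n ih => simp only [ERW.pos, posS, ih]

lemma hist_update (E : ERW G d p Ω P) (s : ℕ → G) (n : ℕ) (a : G) :
    hist E (Function.update s (n + 1) a) (n + 1) = hist E s n ∩ {ω | E.g (n + 1) ω = a} := by
  ext ω
  simp only [hist, Set.mem_ofPred_eq, Set.mem_inter_iff, Finset.mem_Icc]
  constructor
  · intro h
    refine ⟨fun k hk => ?_, ?_⟩
    · have := h k ⟨hk.1, by omega⟩
      rwa [Function.update_of_ne (by omega)] at this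
    · simpa using h (n + 1) ⟨by omega, le_rfl⟩
  · rintro ⟨h1, h2⟩ k hk
    rcases Nat.lt_or_ge n k with h | h
    · obtain rfl : k = n + 1 := by omega
      simpa using h2
    · rw [Function.update_of_ne (by omega)]
      exact h1 k ⟨hk.1, h⟩

lemma weights [IsProbabilityMeasure P] (E : ERW G d p Ω P) (hd : 3 ≤ d) (hp0 : 0 ≤ p)
    (hp1 : p ≤ 1) (q : ℝ) (hqp : p ≤ q) (hqd : (1 - p) / ((d : ℝ) - 1) ≤ q) (s : ℕ → G) (n : ℕ)
    (hs : ∀ k ∈ Finset.Icc 1 n, s k ∈ E.S) :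
    ∃ w : G → ℝ, (∀ a ∈ E.S, 0 ≤ w a) ∧ (∀ a ∈ E.S, w a ≤ q) ∧ ∑ a ∈ E.S, w a = 1 ∧
      ∀ a ∈ E.S, P.real (hist E s n ∩ {ω | E.g (n + 1) ω = a}) = w a * P.real (hist E s n) := by
  have hd' : (3 : ℝ) ≤ d := by exact_mod_cast hd
  have hd1 : (0 : ℝ) < (d : ℝ) - 1 := by linarith
  rcases Nat.eq_zero_or_pos n with rfl | hn
  · refine ⟨fun _ => 1 / d, fun a _ => by positivity, fun a _ => ?_, ?_, fun a ha => ?_⟩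
    · rw [div_le_iff₀ hd1] at hqd
      rw [div_le_iff₀ (by linarith)]
      linarith
    · rw [Finset.sum_const, E.card_S, nsmul_eq_mul]
      field_simp
    · have h0 : hist E s 0 = Set.univ := by ext; simp [hist]
      have := E.init a ha
      simp only [h0, Set.univ_inter, zero_add, probReal_univ, mul_one]
      exact this
  · have hn' : (0 : ℝ) < n := by exact_mod_cast hn
    have hN : ∀ a, ((((Finset.Icc 1 n).filter fun k => s k = a).card : ℝ)) ≤ n := by
      intro a
      have := Finset.card_filter_le (Finset.Icc 1 n) (fun k => s k = a)
      rw [Nat.card_Icc] at this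
      exact_mod_cast (by omega)
    have hr : 0 ≤ (1 - p) / ((d : ℝ) - 1) := div_nonneg (by linarith) hd1.le
    refine ⟨fun a => (p * ((((Finset.Icc 1 n).filter fun k => s k = a).card : ℝ) / n)
          + (1 - p) / ((d : ℝ) - 1)
            * (((n : ℝ) - (((Finset.Icc 1 n).filter fun k => s k = a).card : ℝ)) / n)),
      fun a _ => ?_, fun a _ => ?_, ?_, fun a ha => ?_⟩
    · have := hN a
      have h2 : 0 ≤ ((n : ℝ) - (((Finset.Icc 1 n).filter fun k => s k = a).card : ℝ)) / n :=
        div_nonneg (by linarith) hn'.le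
      positivity
    · have := hN a
      have h2 : 0 ≤ ((n : ℝ) - (((Finset.Icc 1 n).filter fun k => s k = a).card : ℝ)) / n :=
        div_nonneg (by linarith) hn'.le
      calc _ ≤ q * ((((Finset.Icc 1 n).filter fun k => s k = a).card : ℝ) / n) + q *
            (((n : ℝ) - (((Finset.Icc 1 n).filter fun k => s k = a).card : ℝ)) / n) := by
              exact add_le_add (mul_le_mul_of_nonneg_right hqp (by positivity))
                (mul_le_mul_of_nonneg_right hqd h2)
        _ = q := by field_simp; ring
    · have hc : ∑ a ∈ E.S, ((((Finset.Icc 1 n).filter fun k => s k = a).card : ℝ)) = n := by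
        have := Finset.card_eq_sum_card_fiberwise (f := s) (s := Finset.Icc 1 n) (t := E.S)
          (fun k hk => hs k hk)
        rw [Nat.card_Icc] at this
        exact_mod_cast this.symm
      rw [Finset.sum_add_distrib, ← Finset.mul_sum, ← Finset.mul_sum, ← Finset.sum_div,
        ← Finset.sum_div, Finset.sum_sub_distrib, hc, Finset.sum_const, E.card_S, nsmul_eq_mul]
      field_simp
      ring
    · exact E.update n hn s a ha

lemma main_bound [IsProbabilityMeasure P] (E : ERW G d p Ω P) (hd : 3 ≤ d) (hp0 : 0 ≤ p)
    (hp1 : p ≤ 1) (q x c : ℝ) (hqp : p ≤ q) (hqd : (1 - p) / ((d : ℝ) - 1) ≤ q)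
    (hx0 : 0 < x) (hx1 : x ≤ 1) (hc0 : 0 ≤ c) (hc : c * x = q + (1 - q) * x ^ 2) (m : ℕ) :
    ∀ (n : ℕ) (s : ℕ → G), (∀ k ∈ Finset.Icc 1 n, s k ∈ E.S) →
      P.real (hist E s n ∩ {ω | E.dist (n + m) ω = 0}) ≤
        c ^ m * x ^ ((cayleyGraph E.S).dist 1 (posS s n)) * P.real (hist E s n) := by
  induction m with
  | zero =>
    intro n s hs
    by_cases h0 : (cayleyGraph E.S).dist 1 (posS s n) = 0
    · rw [h0]
      simp only [pow_zero, one_mul]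
      exact measureReal_mono Set.inter_subset_left
    · have : hist E s n ∩ {ω | E.dist (n + 0) ω = 0} = ∅ := by
        ext ω
        simp only [Set.mem_inter_iff, Set.mem_ofPred_eq, Set.mem_empty_iff_false, iff_false,
          not_and, add_zero, ERW.dist]
        intro h1
        rw [pos_eq, posS_congr _ s n h1]
        exact h0
      rw [this]
      simp only [measureReal_empty]
      positivity
  | succ m ih =>
    intro n s hs
    obtain ⟨w, hw0, hwq, hsum, hw⟩ := weights E hd hp0 hp1 q hqp hqd s n hs
    obtain ⟨γ, hγ⟩ := exists_gamma E.S E.one_not_mem E.tree (posS s n)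
    have hb := step_bound E.S w (fun a => (cayleyGraph E.S).dist 1 (a * posS s n)) _ γ q x c
      hw0 hwq hsum (hp0.trans hqp) hx0 hx1 hc hγ
    have hsub : hist E s n ∩ {ω | E.dist (n + (m + 1)) ω = 0} ⊆
        ⋃ a ∈ E.S, (hist E (Function.update s (n + 1) a) (n + 1) ∩
          {ω | E.dist (n + 1 + m) ω = 0}) := by
      rintro ω ⟨h1, h2⟩
      simp only [Set.mem_iUnion]
      refine ⟨E.g (n + 1) ω, E.mem_S _ (by omega) ω, ?_, ?_⟩
      · rw [hist_update]; exact ⟨h1, rfl⟩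
      · rwa [show n + 1 + m = n + (m + 1) by ring]
    calc P.real (hist E s n ∩ {ω | E.dist (n + (m + 1)) ω = 0})
        ≤ P.real (⋃ a ∈ E.S, (hist E (Function.update s (n + 1) a) (n + 1) ∩
          {ω | E.dist (n + 1 + m) ω = 0})) := measureReal_mono hsub (measure_ne_top _ _)
      _ ≤ ∑ a ∈ E.S, P.real (hist E (Function.update s (n + 1) a) (n + 1) ∩
          {ω | E.dist (n + 1 + m) ω = 0}) := measureReal_biUnion_finset_le _ _
      _ ≤ ∑ a ∈ E.S, c ^ m * P.real (hist E s n) *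
            (w a * x ^ ((cayleyGraph E.S).dist 1 (a * posS s n))) := by
          refine Finset.sum_le_sum fun a ha => ?_
          have h1 := ih (n + 1) (Function.update s (n + 1) a) (by
            intro k hk
            rw [Finset.mem_Icc] at hk
            rcases Nat.lt_or_ge n k with h | h
            · obtain rfl : k = n + 1 := by omega
              simpa using ha
            · rw [Function.update_of_ne (by omega)]
              exact hs k (Finset.mem_Icc.2 ⟨hk.1, h⟩))
          have h2 : posS (Function.update s (n + 1) a) (n + 1) = a * posS s n := by
            simp only [posS, Function.update_self]
            rw [posS_congr _ s n]
            intro k hk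
            rw [Finset.mem_Icc] at hk
            rw [Function.update_of_ne (by omega)]
          rw [h2] at h1
          refine h1.trans (le_of_eq ?_)
          rw [hist_update, hw a ha]
          ring
      _ = c ^ m * P.real (hist E s n) *
            ∑ a ∈ E.S, w a * x ^ ((cayleyGraph E.S).dist 1 (a * posS s n)) := by
          rw [Finset.mul_sum]
      _ ≤ c ^ m * P.real (hist E s n) * (c * x ^ ((cayleyGraph E.S).dist 1 (posS s n))) := by
          gcongr
      _ = _ := by ring

lemma final_bound [IsProbabilityMeasure P] (E : ERW G d p Ω P) (hd : 3 ≤ d) (hp0 : 0 ≤ p)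
    (hp1 : p ≤ 1) (q : ℝ) (hqp : p ≤ q) (hqd : (1 - p) / ((d : ℝ) - 1) ≤ q)
    (hq0 : 0 < q) (hq2 : q ≤ 1 / 2) (n : ℕ) :
    (P {ω | E.dist n ω = 0}).toReal ≤ Real.exp (-((n : ℝ) * (1 - 2 * q) ^ 2) / 8) := by
  have h1q : 0 < 1 - q := by linarith
  set x := Real.sqrt (q / (1 - q)) with hx
  have hx0 : 0 < x := Real.sqrt_pos.2 (by positivity)
  have hxs : x ^ 2 = q / (1 - q) := Real.sq_sqrt (by positivity)
  have hxs' : (1 - q) * x ^ 2 = q := by rw [hxs]; field_simp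
  have hx1 : x ≤ 1 := by
    rw [hx, Real.sqrt_le_one, div_le_one h1q]
    linarith
  set c := 2 * (1 - q) * x with hcdef
  have hc0 : 0 ≤ c := by positivity
  have hc : c * x = q + (1 - q) * x ^ 2 := by
    rw [hcdef]; linear_combination hxs'
  have hm := main_bound E hd hp0 hp1 q x c hqp hqd hx0 hx1 hc0 hc n 0 (fun _ => 1) (by simp)
  have h0 : hist E (fun _ => (1 : G)) 0 = Set.univ := by ext; simp [hist]
  simp only [h0, Set.univ_inter, zero_add, posS, SimpleGraph.dist_self, pow_zero, mul_one,
    probReal_univ] at hm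
  have hc2 : c ^ 2 = 1 - (1 - 2 * q) ^ 2 := by
    rw [hcdef]; linear_combination 4 * (1 - q) * hxs'
  have hce : c ≤ Real.exp (-((1 - 2 * q) ^ 2) / 8) := by
    refine (sq_le_sq₀ hc0 (Real.exp_pos _).le).1 ?_
    rw [hc2, ← Real.exp_nat_mul]
    have := Real.add_one_le_exp (((2 : ℕ) : ℝ) * (-((1 - 2 * q) ^ 2) / 8))
    push_cast at this ⊢
    nlinarith [sq_nonneg (1 - 2 * q)]
  calc (P {ω | E.dist n ω = 0}).toReal ≤ c ^ n := hm
    _ ≤ Real.exp (-((1 - 2 * q) ^ 2) / 8) ^ n := by gcongr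
    _ = _ := by rw [← Real.exp_nat_mul]; congr 1; ring

end ERWProof

/-- return probability, subcritical memory: if `0 ≤ p < 1/2` and
`(p, d) ≠ (0, 3)`, then `P(Δ n = 0) ≤ exp(- n α² / 8)` for all `n ≥ 1`, where
`α = 1 - 2(1-p)/(d-1)` if `p ≤ 1/d` and `α = 1 - 2p` if `1/d < p < 1/2`. -/
theorem erw_return_prob_exponential
    {G : Type*} [Group G] [DecidableEq G] {Ω : Type*} [MeasurableSpace Ω]
    {P : Measure Ω} [IsProbabilityMeasure P]
    (d : ℕ) (hd : 3 ≤ d) (p : ℝ) (hp0 : 0 ≤ p) (hp : p < 1 / 2)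
    (hpd : ¬(p = 0 ∧ d = 3))
    (E : ERW G d p Ω P) :
    ∀ n : ℕ, 1 ≤ n →
      (P {ω | E.dist n ω = 0}).toReal ≤
        Real.exp (-((n : ℝ) *
          (if p ≤ 1 / (d : ℝ) then 1 - 2 * (1 - p) / ((d : ℝ) - 1)
            else 1 - 2 * p) ^ 2) / 8) := by
  intro n _
  have hd' : (3 : ℝ) ≤ d := by exact_mod_cast hd
  have hd1 : (0 : ℝ) < (d : ℝ) - 1 := by linarith
  split_ifs with h
  · have h' : p * d ≤ 1 := by rwa [le_div_iff₀ (by linarith)] at h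
    have := ERWProof.final_bound E hd hp0 (by linarith) ((1 - p) / ((d : ℝ) - 1))
      (by rw [le_div_iff₀ hd1]; linarith) le_rfl (div_pos (by linarith) hd1)
      (by rw [div_le_iff₀ hd1]; linarith) n
    rwa [mul_div_assoc]
  · have h' : 1 < p * d := by rwa [not_le, div_lt_iff₀ (by linarith)] at h
    have hp' : 0 < p := by
      rcases hp0.lt_or_eq with h0 | h0
      · exact h0
      · rw [← h0] at h'; linarith
    exact ERWProof.final_bound E hd hp0 (by linarith) p le_rfl
      (by rw [div_le_iff₀ hd1]; linarith) hp' hp.le n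

end
end
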